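/- Let H be a semisimple and cosemisimple Hopf algebra of dimension d over an algebraically closed field F (of arbitrary characteristic), and let D be a division algebra over F of degree m. If gcd(d!, m) = 1, then any action of H on D factors through an action of a cocommutative Hopf algebra; in particular, if the action is inner faithful, then H is cocommutative. -/

import Mathlib

open TensorProduct

/-- An action of a (bi/Hopf) algebra `H` on an algebra `A`, where the comultiplication and
counit of `H` are supplied explicitly as `comul` and `counit`.  This says exactly that `A`
is an `H`-module algebra:  `h ⬝ (ab) = ∑ (h₁ ⬝ a)(h₂ ⬝ b)` and `h ⬝ 1 = ε(h) 1`. -/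
structure ModAlgAction (k : Type) [CommRing k] (H : Type) [Ring H] [Module k H]
    (comul : H →ₗ[k] H ⊗[k] H) (counit : H →ₗ[k] k)
    (A : Type) [Ring A] [Algebra k A] where
  /-- the action map -/
  act : H →ₗ[k] A →ₗ[k] A
  one_act : ∀ a : A, act 1 a = a
  mul_act : ∀ (g h : H) (a : A), act (g * h) a = act g (act h a)
  act_one : ∀ h : H, act h 1 = algebraMap k A (counit h)
  act_mul : ∀ (h : H) (a b : A), act h (a * b) =
    TensorProduct.lift (((LinearMap.mul k A).comp (act.flip a)).compl₂ (act.flip b)) (comul h)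

/-- An action of a Hopf algebra `H` on an algebra `A`, i.e. an `H`-module algebra
structure on `A`. -/
abbrev HopfAction (k : Type) [CommRing k] (H : Type) [Ring H] [Bialgebra k H]
    (A : Type) [Ring A] [Algebra k A] :=
  ModAlgAction k H (Coalgebra.comul (R := k)) (Coalgebra.counit (R := k)) A

/-- The `k`-subspace `I ⊗ H + H ⊗ I` of `H ⊗ H` determined by a subspace `I ⊆ H`. -/
noncomputable def tensorIdeal (k : Type) [CommRing k] (H : Type) [Ring H] [Module k H]
    (I : Submodule k H) : Submodule k (H ⊗[k] H) :=
  Submodule.span k {z : H ⊗[k] H |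
    (∃ a ∈ I, ∃ b : H, z = a ⊗ₜ[k] b) ∨ (∃ a : H, ∃ b ∈ I, z = a ⊗ₜ[k] b)}

/-- A (two-sided) Hopf ideal of `H`, with respect to explicitly supplied comultiplication,
counit and antipode. -/
def IsHopfIdealWith (k : Type) [CommRing k] (H : Type) [Ring H] [Module k H]
    (comul : H →ₗ[k] H ⊗[k] H) (counit : H →ₗ[k] k) (antipode : H →ₗ[k] H)
    (I : Submodule k H) : Prop :=
  (∀ x ∈ I, ∀ h : H, h * x ∈ I ∧ x * h ∈ I) ∧
  (∀ x ∈ I, comul x ∈ tensorIdeal k H I) ∧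
  (∀ x ∈ I, counit x = 0) ∧
  (∀ x ∈ I, antipode x ∈ I)

/-- A Hopf ideal of a Hopf algebra `H`. -/
abbrev IsHopfIdeal (k : Type) [CommRing k] (H : Type) [Ring H] [HopfAlgebra k H]
    (I : Submodule k H) : Prop :=
  IsHopfIdealWith k H (Coalgebra.comul (R := k)) (Coalgebra.counit (R := k))
    (HopfAlgebra.antipode (R := k)) I

/-- Inner faithfulness of an action map `act`: no nonzero Hopf ideal annihilates `A`. -/
def InnerFaithfulWith (k : Type) [CommRing k] (H : Type) [Ring H] [Module k H]
    (comul : H →ₗ[k] H ⊗[k] H) (counit : H →ₗ[k] k) (antipode : H →ₗ[k] H)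
    (A : Type) [Ring A] [Algebra k A] (act : H →ₗ[k] A →ₗ[k] A) : Prop :=
  ∀ I : Submodule k H, IsHopfIdealWith k H comul counit antipode I →
    (∀ x ∈ I, ∀ a : A, act x a = 0) → I = ⊥

/-- Inner faithfulness of a Hopf algebra action: no nonzero Hopf ideal of `H` acts by zero. -/
abbrev HopfAction.InnerFaithful {k : Type} [CommRing k] {H : Type} [Ring H] [HopfAlgebra k H]
    {A : Type} [Ring A] [Algebra k A] (ha : HopfAction k H A) : Prop :=
  InnerFaithfulWith k H (Coalgebra.comul (R := k)) (Coalgebra.counit (R := k))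
    (HopfAlgebra.antipode (R := k)) A ha.act

/-- The set of invariants of an action. -/
def ModAlgAction.invariants {k : Type} [CommRing k] {H : Type} [Ring H] [Module k H]
    {comul : H →ₗ[k] H ⊗[k] H} {counit : H →ₗ[k] k}
    {A : Type} [Ring A] [Algebra k A] (ha : ModAlgAction k H comul counit A) : Set A :=
  {a : A | ∀ h : H, ha.act h a = counit h • a}

/-- The kernel of an action, as a subspace of `H`. -/
noncomputable def ModAlgAction.actionKernel {k : Type} [CommRing k] {H : Type} [Ring H]
    [Module k H] {comul : H →ₗ[k] H ⊗[k] H} {counit : H →ₗ[k] k}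
    {A : Type} [Ring A] [Algebra k A] (ha : ModAlgAction k H comul counit A) :
    Submodule k H :=
  ⨅ a : A, LinearMap.ker (ha.act.flip a)

/-- `H` is cosemisimple (with explicitly supplied comultiplication):  there exists a
normalized two-sided integral `λ : H → k`, i.e. `λ(1) = 1` and
`∑ h₁ λ(h₂) = λ(h) 1 = ∑ λ(h₁) h₂`. -/
def IsCosemisimpleWith (k : Type) [CommRing k] (H : Type) [Ring H] [Module k H]
    (comul : H →ₗ[k] H ⊗[k] H) : Prop :=
  ∃ lam : H →ₗ[k] k, lam 1 = 1 ∧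
    (∀ h : H, (TensorProduct.rid k H) ((LinearMap.lTensor H lam) (comul h)) = lam h • 1) ∧
    (∀ h : H, (TensorProduct.lid k H) ((LinearMap.rTensor H lam) (comul h)) = lam h • 1)

/-- A Hopf algebra is cosemisimple if its dual is semisimple; equivalently (by the dual
Maschke theorem) if it admits a normalized two-sided integral `λ ∈ H*`. -/
abbrev IsCosemisimple (k : Type) [CommRing k] (H : Type) [Ring H] [HopfAlgebra k H] : Prop :=
  IsCosemisimpleWith k H (Coalgebra.comul (R := k))

open Coalgebra HopfAlgebra WithConv

/-!
Let `H` act on a field `L`, let `Conv = Hom_F(H, L)` with the convolution product, and let `B` be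
the `L`-span in `Conv` of the maps `h ↦ h • a`, `a ∈ L`. This is a commutative `H`-stable
subalgebra, Frobenius via evaluation at a normalized integral `Λ` of `H`. By Skryabin's argument
`Conv` is free over `B`, so cosemisimplicity of `H` yields `b₀ ∈ B` with `b₀ b = ε(b) b₀` and
`ε(b₀) ≠ 0`; hence the Casimir scalar of `B` is nonzero and `B` is separable over `L`.

A derivation of `L` acts on `Conv` and commutes with `H`. The derivation `B → Conv / B` it induces
is inner, by separability, and invariance under `Λ` puts the implementing element in `B`; so `B` is
stable under every derivation of `L`. Therefore the entries of the reduced echelon basis of `B`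
generate an extension of `F` without derivations. Since `F` is algebraically closed, they lie in
`F`, i.e. `B = L ⊗ B₀` with `B₀ ⊆ H*` commutative, and the quotient of `H` by the annihilator of
`B₀`, the kernel of the action, is cocommutative.

For a division algebra `D` with center `Z`, Artin's argument gives `[D : Z·D^H] ≤ dim H`. This index
divides `[D : Z] = m²`, so coprimality forces `D = Z·D^H`, and `H` acts on the field `Z` with the
same kernel as on `D`.
-/

section Sweedler

variable {F H V : Type*} [CommSemiring F] [AddCommMonoid V] [Module F V]

lemma sum_counit_right_smul_left [AddCommMonoid H] [Module F H] [Coalgebra F H] (u : H →ₗ[F] V)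
    (h : H) :
    ∑ i ∈ (ℛ F h).index, counit (R := F) ((ℛ F h).right i) • u ((ℛ F h).left i) = u h := by
  simpa only [map_sum, LinearMap.rTensor_tmul, TensorProduct.rid_tmul, one_smul] using
    congrArg (fun t => TensorProduct.rid F V (LinearMap.rTensor F u t))
      (sum_tmul_counit_eq (ℛ F h))

lemma sum_counit_left_smul_right [AddCommMonoid H] [Module F H] [Coalgebra F H] (u : H →ₗ[F] V)
    (h : H) :
    ∑ i ∈ (ℛ F h).index, counit (R := F) ((ℛ F h).left i) • u ((ℛ F h).right i) = u h := by
  simpa only [map_sum, map_smul] using congrArg u (sum_counit_smul (ℛ F h))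

lemma sum_tmul_mul_antipode [Semiring H] [HopfAlgebra F H] (h : H) :
    ∑ i ∈ (ℛ F h).index, ∑ j ∈ (ℛ F ((ℛ F h).left i)).index,
      (ℛ F ((ℛ F h).left i)).left j ⊗ₜ[F]
        ((ℛ F ((ℛ F h).left i)).right j * antipode F ((ℛ F h).right i)) = h ⊗ₜ[F] 1 := by
  have coassoc := congrArg
    (LinearMap.lTensor H (LinearMap.mul' F H ∘ₗ LinearMap.lTensor H (antipode F)))
    (sum_tmul_tmul_eq (ℛ F h) (fun i => ℛ F ((ℛ F h).left i)) fun i => ℛ F ((ℛ F h).right i))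
  simp only [map_sum, LinearMap.lTensor_tmul, LinearMap.comp_apply, LinearMap.mul'_apply] at coassoc
  rw [coassoc]
  simp only [← tmul_sum, sum_mul_antipode_eq_smul, tmul_smul]
  exact sum_counit_right_smul_left ((TensorProduct.mk F H H).flip 1) h

end Sweedler

namespace HopfAction

variable {F H A : Type} [CommRing F] [Ring H] [Bialgebra F H] [Ring A] [Algebra F A]
  (ha : HopfAction F H A)

lemma act_mul_eq_sum (h : H) (a b : A) :
    ha.act h (a * b) =
      ∑ i ∈ (ℛ F h).index, ha.act ((ℛ F h).left i) a * ha.act ((ℛ F h).right i) b := by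
  rw [ha.act_mul, ← (ℛ F h).eq]
  simp only [map_sum, lift.tmul, LinearMap.compl₂_apply, LinearMap.comp_apply,
    LinearMap.flip_apply, LinearMap.mul_apply']

lemma act_mul_of_right_mem_invariants {b : A} (hb : b ∈ ha.invariants) (h : H) (a : A) :
    ha.act h (a * b) = ha.act h a * b := by
  simp only [ha.act_mul_eq_sum, hb _, mul_smul_comm]
  exact sum_counit_right_smul_left ((LinearMap.mul F A).flip b ∘ₗ ha.act.flip a) h

lemma act_mul_of_left_mem_invariants {a : A} (hinv : a ∈ ha.invariants) (h : H) (b : A) :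
    ha.act h (a * b) = a * ha.act h b := by
  simp only [ha.act_mul_eq_sum, hinv _, smul_mul_assoc]
  exact sum_counit_left_smul_right (LinearMap.mul F A a ∘ₗ ha.act.flip b) h

lemma mem_actionKernel {h : H} : h ∈ ha.actionKernel ↔ ∀ a, ha.act h a = 0 := by
  simp only [ModAlgAction.actionKernel, Submodule.mem_iInf, LinearMap.mem_ker,
    LinearMap.flip_apply]

lemma sum_act_mul_act_antipode {F H A : Type} [CommRing F] [Ring H] [HopfAlgebra F H] [Ring A]
    [Algebra F A] (ha : HopfAction F H A) (h : H) (a b : A) :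
    ∑ i ∈ (ℛ F h).index, ha.act ((ℛ F h).left i) (a * ha.act (antipode F ((ℛ F h).right i)) b) =
      ha.act h a * b := by
  simp only [ha.act_mul_eq_sum _ a, ← ha.mul_act]
  simpa only [map_sum, lift.tmul, LinearMap.compl₁₂_apply, LinearMap.flip_apply,
    LinearMap.mul_apply', ha.one_act] using
    congrArg (lift ((LinearMap.mul F A).compl₁₂ (ha.act.flip a) (ha.act.flip b)))
      (sum_tmul_mul_antipode h)

end HopfAction

section ConvSMul

variable {F H k V : Type*} [CommRing F] [AddCommGroup H] [Module F H] [Coalgebra F H]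
  [CommRing k] [Algebra F k] [AddCommGroup V] [Module k V] [Module F V] [IsScalarTower F k V]

/-- The right action of the convolution algebra `Hom(H, k)` on `Hom(H, V)`, where `V` is a
`k`-module: `(u ⋆ f)(h) = ∑ f(h₂) • u(h₁)`. -/
noncomputable def convSMul : (H →ₗ[F] V) →ₗ[k] (H →ₗ[F] k) →ₗ[k] H →ₗ[F] V :=
  LinearMap.mk₂ k
    (fun u f => lift ((Algebra.lsmul F F V).toLinearMap.compl₁₂ f u).flip ∘ₗ comul)
    (fun u u' f => by
      rw [← LinearMap.add_comp]; congr 1; ext x y; simp)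
    (fun c u f => by
      rw [← LinearMap.smul_comp]; congr 1; ext x y; simp [smul_comm (f y) c])
    (fun u f f' => by
      rw [← LinearMap.add_comp]; congr 1; ext x y; simp)
    (fun c u f => by
      rw [← LinearMap.smul_comp]; congr 1; ext x y; simp)

lemma convSMul_apply (u : H →ₗ[F] V) (f : H →ₗ[F] k) (h : H) :
    convSMul u f h = ∑ i ∈ (ℛ F h).index, f ((ℛ F h).right i) • u ((ℛ F h).left i) := by
  simp only [convSMul, LinearMap.mk₂_apply, LinearMap.comp_apply]
  conv_lhs => rw [← (ℛ F h).eq]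
  simp only [map_sum, lift.tmul, LinearMap.flip_apply, LinearMap.compl₁₂_apply,
    AlgHom.toLinearMap_apply, Algebra.lsmul_coe]

lemma convSMul_convSMul (u : H →ₗ[F] V) (f g : H →ₗ[F] k) :
    convSMul (convSMul u f) g = convSMul u (toConv f * toConv g).ofConv := by
  ext h
  have coassoc := congrArg
    (lift (((Algebra.lsmul F F V).toLinearMap.flip ∘ₗ u).compl₂
      (LinearMap.mul' F k ∘ₗ TensorProduct.map f g)))
    (sum_tmul_tmul_eq (ℛ F h) (fun i => ℛ F ((ℛ F h).left i)) fun i => ℛ F ((ℛ F h).right i))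
  simp only [map_sum, lift.tmul, LinearMap.compl₂_apply, LinearMap.comp_apply, map_tmul,
    LinearMap.mul'_apply, LinearMap.flip_apply, AlgHom.toLinearMap_apply,
    Algebra.lsmul_coe] at coassoc
  have conv_right (i) : (toConv f * toConv g).ofConv ((ℛ F h).right i) = _ :=
    (ℛ F ((ℛ F h).right i)).convMul_apply (toConv f) (toConv g)
  simp only [convSMul_apply, conv_right, Finset.smul_sum, Finset.sum_smul, ← mul_smul,
    mul_comm (g _)]
  exact coassoc

lemma lift_comp_comul_mem [Module.Free F H] [Module.Finite F H] {W : Submodule k (H →ₗ[F] V)}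
    (hW : ∀ u ∈ W, ∀ f : H →ₗ[F] k, convSMul u f ∈ W) {T : H →ₗ[F] H →ₗ[F] V}
    (hT : ∀ z, T.flip z ∈ W) :
    lift T ∘ₗ comul ∈ W := by
  let e := Module.Free.chooseBasis F H
  suffices lift T ∘ₗ comul =
      ∑ l, convSMul (T.flip (e l)) (Algebra.linearMap F k ∘ₗ e.coord l) by
    rw [this]
    exact W.sum_mem fun l _ => hW _ (hT _) _
  ext h
  have expand (y z : H) : T y z = ∑ l, e.coord l z • T y (e l) := by
    conv_lhs => rw [← e.sum_repr z]
    simp only [map_sum, map_smul, Module.Basis.coord_apply]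
  simp only [LinearMap.sum_apply, convSMul_apply, LinearMap.comp_apply, Algebra.linearMap_apply,
    algebraMap_smul, LinearMap.flip_apply]
  rw [Finset.sum_comm]
  conv_lhs => rw [← (ℛ F h).eq]
  simp only [map_sum, lift.tmul]
  exact Finset.sum_congr rfl fun i _ => expand _ _

lemma orbit_smul {B M : Type*} [Ring B] [Module F B] [AddCommGroup M] [Module F M]
    [Module B M] {actB : H →ₗ[F] B →ₗ[F] B} {actM : H →ₗ[F] M →ₗ[F] M} {π : B →ₗ[F] k}
    {q : M →ₗ[F] V}
    (compat : ∀ h (b : B) (m : M), actM h (b • m) =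
      ∑ i ∈ (ℛ F h).index, actB ((ℛ F h).right i) b • actM ((ℛ F h).left i) m)
    (hqπ : ∀ (b : B) m, q (b • m) = π b • q m) (b : B) (m : M) :
    actM.flip.compr₂ q (b • m) = convSMul (actM.flip.compr₂ q m) (actB.flip.compr₂ π b) := by
  ext h
  simp only [convSMul_apply, LinearMap.compr₂_apply, LinearMap.flip_apply, compat, map_sum, hqπ]

end ConvSMul

/-- `actM` makes `M` an `H`-module such that `B ⊗ M → M` is compatible with `actB`, with the factors
of the coproduct in the order `h (b m) = ∑ (h₂ b) (h₁ m)` of right multiplication. -/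
structure IsCompatibleAction {F H B M : Type*} [CommRing F] [Ring H] [Bialgebra F H] [Ring B]
    [Module F B] [AddCommGroup M] [Module F M] [Module B M] (actB : H →ₗ[F] B →ₗ[F] B)
    (actM : H →ₗ[F] M →ₗ[F] M) : Prop where
  one_act : ∀ m, actM 1 m = m
  mul_act : ∀ g h m, actM (g * h) m = actM g (actM h m)
  act_smul : ∀ h (b : B) (m : M), actM h (b • m) =
    ∑ i ∈ (ℛ F h).index, actB ((ℛ F h).right i) b • actM ((ℛ F h).left i) m

section Freeness

variable {F H k V B M : Type*} [Field F] [Ring H] [HopfAlgebra F H] [FiniteDimensional F H]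
  [Field k] [Algebra F k] [AddCommGroup V] [Module k V] [Module F V] [IsScalarTower F k V]
  [AddCommGroup M] [Module F M]
  {actM : H →ₗ[F] M →ₗ[F] M} {q : M →ₗ[F] V}

lemma eq_top_of_convSMul_mem_of_orbit_mem
    (one_act : ∀ m, actM 1 m = m) (mul_act : ∀ g h m, actM (g * h) m = actM g (actM h m))
    (hq : Function.Surjective q) {W : Submodule k (H →ₗ[F] V)}
    (hW : ∀ u ∈ W, ∀ f : H →ₗ[F] k, convSMul u f ∈ W)
    (hM : ∀ m, actM.flip.compr₂ q m ∈ W) : W = ⊤ := by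
  have const_mem (m : M) : counit.smulRight (q m) ∈ W := by
    have eq_lift : counit.smulRight (q m) =
        lift (((LinearMap.mul F H).compr₂ (actM.flip.compr₂ q m)).compl₂ (antipode F)) ∘ₗ
          comul := by
      ext h
      rw [LinearMap.comp_apply, ← (ℛ F h).eq]
      simp only [map_sum, lift.tmul, LinearMap.compl₂_apply, LinearMap.compr₂_apply,
        LinearMap.mul_apply']
      rw [← map_sum, ← map_sum, sum_mul_antipode_eq_smul]
      simp [one_act]
    rw [eq_lift]
    refine lift_comp_comul_mem hW fun z => ?_
    convert hM (actM (antipode F z) m) using 1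
    ext y
    simp [mul_act]
  refine eq_top_iff.2 fun u _ => ?_
  have eq_lift : u = lift ((LinearMap.lsmul F V).flip.compl₁₂ u counit).flip ∘ₗ comul := by
    ext h
    rw [LinearMap.comp_apply, ← (ℛ F h).eq]
    simpa only [map_sum, lift.tmul, LinearMap.flip_apply, LinearMap.compl₁₂_apply,
      LinearMap.lsmul_apply] using (sum_counit_left_smul_right u h).symm
  rw [eq_lift]
  refine lift_comp_comul_mem hW fun z => ?_
  obtain ⟨m, hm⟩ := hq (u z)
  convert const_mem m using 1
  ext y
  simp [hm]

variable [Ring B] [Module F B] [Module B M] {actB : H →ₗ[F] B →ₗ[F] B} {π : B →ₗ[F] k}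

-- The generators `m` induce a surjection `Hom(H, k)^r → Hom(H, V)` of spaces of the same dimension
-- `r * dim H`, so it is injective.
lemma residue_act_coeff_eq_zero [Module.Finite k V]
    (hact : IsCompatibleAction actB actM) (hq : Function.Surjective q)
    (hqπ : ∀ (b : B) m, q (b • m) = π b • q m)
    {r : ℕ} {m : Fin r → M} (hm : Submodule.span B (Set.range m) = ⊤)
    (hr : r ≤ Module.finrank k V) {b : Fin r → B} (hb : ∑ i, b i • m i = 0) (i : Fin r) (h : H) :
    π (actB h (b i)) = 0 := by
  let Ψ : (Fin r → H →ₗ[F] k) →ₗ[k] H →ₗ[F] V :=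
    ∑ i, convSMul (actM.flip.compr₂ q (m i)) ∘ₗ LinearMap.proj i
  have Ψ_apply (f) : Ψ f = ∑ i, convSMul (actM.flip.compr₂ q (m i)) (f i) := by
    simp only [Ψ, LinearMap.sum_apply, LinearMap.comp_apply, LinearMap.proj_apply]
  have Ψ_coeff (c : Fin r → B) :
      Ψ (fun i => actB.flip.compr₂ π (c i)) = actM.flip.compr₂ q (∑ i, c i • m i) := by
    simp only [Ψ_apply, map_sum, orbit_smul hact.act_smul hqπ]
  have surjective : Function.Surjective Ψ := by
    refine LinearMap.range_eq_top.1 <|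
      eq_top_of_convSMul_mem_of_orbit_mem hact.one_act hact.mul_act hq ?_ ?_
    · rintro _ ⟨f, rfl⟩ g
      refine ⟨fun i => (toConv (f i) * toConv g).ofConv, ?_⟩
      simp only [Ψ_apply, map_sum, LinearMap.sum_apply, convSMul_convSMul]
    · intro x
      obtain ⟨c, rfl⟩ := (Submodule.mem_span_range_iff_exists_fun B).1
        (hm ▸ Submodule.mem_top : x ∈ _)
      exact ⟨_, Ψ_coeff c⟩
  have finrank_eq : Module.finrank k (Fin r → H →ₗ[F] k) = Module.finrank k (H →ₗ[F] V) := by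
    refine le_antisymm ?_ (LinearMap.finrank_le_finrank_of_surjective surjective)
    rw [Module.finrank_pi_fintype, Module.finrank_linearMap F k, Module.finrank_linearMap F k]
    simpa [mul_comm] using Nat.mul_le_mul_left _ hr
  have coeff_eq_zero : (fun i => actB.flip.compr₂ π (b i)) = 0 := by
    refine (LinearMap.injective_iff_surjective_of_finrank_eq_finrank finrank_eq).2 surjective ?_
    rw [Ψ_coeff, hb, map_zero, map_zero]
  exact LinearMap.congr_fun (congrFun coeff_eq_zero i) h

end Freeness

section Semilocal

variable {B M : Type*} [CommRing B] [AddCommGroup M] [Module B M]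

lemma eq_top_of_forall_isMaximal_sup_smul_top_eq_top [Module.Finite B M] {N : Submodule B M}
    (hN : ∀ P : Ideal B, P.IsMaximal → N ⊔ P • ⊤ = ⊤) : N = ⊤ := by
  suffices Module.annihilator B (M ⧸ N) = ⊤ by
    rwa [Module.annihilator_eq_top_iff, Submodule.Quotient.subsingleton_iff] at this
  by_contra annihilator_ne_top
  obtain ⟨P, hP, annihilator_le⟩ := Ideal.exists_le_maximal _ annihilator_ne_top
  have top_le : (⊤ : Submodule B (M ⧸ N)) ≤ P • ⊤ := by
    have := congrArg (Submodule.map N.mkQ) (hN P hP)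
    rw [Submodule.map_sup, Submodule.map_smul'', Submodule.mkQ_map_self, bot_sup_eq,
      Submodule.map_top, Submodule.range_mkQ] at this
    exact this.ge
  obtain ⟨c, hcP, hc⟩ := Submodule.exists_sub_one_mem_and_smul_eq_zero_of_fg_of_le_smul P ⊤
    Module.Finite.fg_top top_le
  have hc_mem : c ∈ P := annihilator_le (Module.mem_annihilator.2 fun x => hc x trivial)
  exact hP.ne_top ((Ideal.eq_top_iff_one P).2 (by simpa using P.sub_mem hc_mem hcP))

lemma exists_forall_sub_mem_smul_top {ι : Type*} [Finite ι] {I : ι → Ideal B}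
    (hI : Pairwise (Function.onFun IsCoprime I)) (x : ι → M) :
    ∃ y, ∀ i, y - x i ∈ (I i • ⊤ : Submodule B M) := by
  classical
  cases nonempty_fintype ι
  choose e he using fun j => Ideal.exists_forall_sub_mem_ideal hI (Pi.single j 1)
  refine ⟨∑ j, e j • x j, fun i => ?_⟩
  have expand : ∑ j, e j • x j - x i = ∑ j, (e j - Pi.single (M := fun _ => B) j 1 i) • x j := by
    simp [sub_smul, Finset.sum_sub_distrib, Pi.single_apply, ite_smul]
  rw [expand]
  exact Submodule.sum_mem _ fun j _ => Submodule.smul_mem_smul (he j i) trivial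

lemma exists_span_range_sup_smul_top_eq_top [Module.Finite B M] {P : Ideal B} (hP : P.IsMaximal)
    {r : ℕ} (hr : Module.finrank (B ⧸ P) (M ⧸ (P • ⊤ : Submodule B M)) ≤ r) :
    ∃ m : Fin r → M, Submodule.span B (Set.range m) ⊔ P • ⊤ = ⊤ := by
  let := Ideal.Quotient.field P
  let b := Module.finBasis (B ⧸ P) (M ⧸ (P • ⊤ : Submodule B M))
  choose g hg using fun i => Submodule.mkQ_surjective (P • ⊤ : Submodule B M) (b i)
  refine ⟨Function.extend (Fin.castLE hr) g 0, ?_⟩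
  rw [sup_comm, ← Submodule.map_mkQ_eq_top, eq_top_iff]
  calc (⊤ : Submodule B (M ⧸ (P • ⊤ : Submodule B M)))
      = Submodule.span B (Set.range b) := by
        rw [← Submodule.restrictScalars_span B (B ⧸ P) Ideal.Quotient.mk_surjective, b.span_eq,
          Submodule.restrictScalars_top]
    _ ≤ _ := by
        rw [Submodule.span_le]
        rintro _ ⟨i, rfl⟩
        refine ⟨g i, Submodule.subset_span ⟨Fin.castLE hr i, ?_⟩, hg i⟩
        exact (Fin.castLE_injective hr).extend_apply g 0 i

lemma exists_span_range_eq_top_of_finrank_le [Finite (MaximalSpectrum B)] [Module.Finite B M]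
    {r : ℕ} (hr : ∀ P : Ideal B, P.IsMaximal →
      Module.finrank (B ⧸ P) (M ⧸ (P • ⊤ : Submodule B M)) ≤ r) :
    ∃ m : Fin r → M, Submodule.span B (Set.range m) = ⊤ := by
  choose m hm using fun P : MaximalSpectrum B =>
    exists_span_range_sup_smul_top_eq_top P.isMaximal (hr P.asIdeal P.isMaximal)
  have coprime : Pairwise (Function.onFun IsCoprime (MaximalSpectrum.asIdeal (R := B))) :=
    fun P Q hPQ =>
      haveI := P.isMaximal
      haveI := Q.isMaximal
      Ideal.isCoprime_of_isMaximal (mt MaximalSpectrum.ext hPQ)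
  choose n hn using fun i => exists_forall_sub_mem_smul_top coprime fun P => m P i
  refine ⟨n, eq_top_of_forall_isMaximal_sup_smul_top_eq_top fun P hP => ?_⟩
  refine top_unique ((hm ⟨P, hP⟩).ge.trans (sup_le (Submodule.span_le.2 ?_) le_sup_right))
  rintro _ ⟨i, rfl⟩
  rw [SetLike.mem_coe, ← sub_sub_cancel (n i) (m ⟨P, hP⟩ i)]
  exact Submodule.sub_mem _ (Submodule.mem_sup_left (Submodule.subset_span ⟨i, rfl⟩))
    (Submodule.mem_sup_right (hn i ⟨P, hP⟩))

end Semilocal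

section Freeness

variable {F H B M : Type*} [Field F] [Ring H] [HopfAlgebra F H] [FiniteDimensional F H]
  [CommRing B] [Algebra F B] [AddCommGroup M] [Module B M] [Module F M] [IsScalarTower F B M]
  [Module.Finite B M] {actB : H →ₗ[F] B →ₗ[F] B} {actM : H →ₗ[F] M →ₗ[F] M}

lemma linearIndependent_of_span_eq_top_of_le_finrank
    (hact : IsCompatibleAction actB actM)
    {P : Ideal B} (hP : P.IsMaximal) (simple : ∀ b, (∀ h, actB h b ∈ P) → b = 0)
    {r : ℕ} {m : Fin r → M} (hm : Submodule.span B (Set.range m) = ⊤)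
    (hr : r ≤ Module.finrank (B ⧸ P) (M ⧸ (P • ⊤ : Submodule B M))) : LinearIndependent B m := by
  let := Ideal.Quotient.field P
  let q : M →ₗ[F] M ⧸ (P • ⊤ : Submodule B M) := (P • ⊤ : Submodule B M).mkQ.restrictScalars F
  have hq : Function.Surjective q := Submodule.mkQ_surjective (P • ⊤ : Submodule B M)
  refine Fintype.linearIndependent_iff.2 fun b hb i => simple _ fun h => ?_
  exact Ideal.Quotient.eq_zero_iff_mem.1 <|
    residue_act_coeff_eq_zero (π := (Ideal.Quotient.mkₐ F P).toLinearMap) hact hq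
      (fun _ _ => rfl) hm hr hb i h

theorem module_free_of_isCompatibleAction [Finite (MaximalSpectrum B)]
    (hact : IsCompatibleAction actB actM)
    (simple : ∀ P : Ideal B, P.IsMaximal → ∀ b, (∀ h, actB h b ∈ P) → b = 0) :
    Module.Free B M := by
  classical
  have exists_generators : ∃ r : ℕ, ∃ m : Fin r → M, Submodule.span B (Set.range m) = ⊤ :=
    Module.Finite.exists_fin
  obtain ⟨m, hm⟩ := Nat.find_spec exists_generators
  suffices LinearIndependent B m from .of_basis (Module.Basis.mk this hm.ge)
  obtain hr | hr := Nat.eq_zero_or_pos (Nat.find exists_generators)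
  · have : IsEmpty (Fin (Nat.find exists_generators)) := hr ▸ Fin.isEmpty
    exact linearIndependent_empty_type
  obtain ⟨P, hP, hPr⟩ : ∃ P : Ideal B, P.IsMaximal ∧
      Nat.find exists_generators ≤ Module.finrank (B ⧸ P) (M ⧸ (P • ⊤ : Submodule B M)) := by
    by_contra! finrank_lt
    exact Nat.find_min exists_generators (Nat.sub_lt hr one_pos)
      (exists_span_range_eq_top_of_finrank_le fun P hP => Nat.le_sub_one_of_lt (finrank_lt P hP))
  exact linearIndependent_of_span_eq_top_of_le_finrank hact hP (simple P hP) hm hPr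

end Freeness

section DualBases

variable {L B ι : Type*} [Field L] [CommRing B] [Algebra L B] [Fintype ι]

/-- `v` and `w` are dual bases of `B` for the bilinear form `(a, b) ↦ θ (a * b)`, expressed by the
two expansions of an element of `B`. -/
structure AreDualBases (θ : B →ₗ[L] L) (v w : ι → B) : Prop where
  sum_left : ∀ b, ∑ i, θ (v i * b) • w i = b
  sum_right : ∀ b, ∑ i, θ (b * w i) • v i = b

lemma exists_areDualBases [Module.Finite L B] {θ : B →ₗ[L] L}
    (nondegenerate : ∀ b, (∀ c, θ (b * c) = 0) → b = 0) :
    ∃ (n : ℕ) (v w : Fin n → B), AreDualBases θ v w := by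
  let β : LinearMap.BilinForm L B := (LinearMap.mul L B).compr₂ θ
  have hβ : β.Nondegenerate :=
    ⟨nondegenerate, fun b hb => nondegenerate b fun c => mul_comm b c ▸ hb c⟩
  let v := Module.finBasis L B
  let w := β.dualBasis hβ v
  have pairing (i j) : θ (w i * v j) = if j = i then 1 else 0 :=
    LinearMap.BilinForm.apply_dualBasis_left hβ v i j
  have repr_w (b i) : w.repr b i = θ (v i * b) := by
    conv_rhs => rw [← w.sum_repr b, mul_comm]
    simp [Finset.sum_mul, pairing, -Module.Basis.sum_repr]
  have repr_v (b i) : v.repr b i = θ (b * w i) := by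
    conv_rhs => rw [← v.sum_repr b, mul_comm]
    simp [Finset.mul_sum, pairing, -Module.Basis.sum_repr]
  refine ⟨_, v, w, fun b => ?_, fun b => ?_⟩
  · simp only [← repr_w, w.sum_repr]
  · simp only [← repr_v, v.sum_repr]

namespace AreDualBases

variable {θ : B →ₗ[L] L} {v w : ι → B} (hvw : AreDualBases θ v w)

include hvw

lemma sum_apply_mul_right {V : Type*} [AddCommGroup V] [Module L V] (G : B →ₗ[L] B →ₗ[L] V)
    (b : B) : ∑ k, G (w k) (v k * b) = ∑ k, G (b * w k) (v k) :=
  calc ∑ k, G (w k) (v k * b)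
      = ∑ k, ∑ l, G (θ (v k * (b * w l)) • w k) (v l) := by
        refine Finset.sum_congr rfl fun k _ => ?_
        conv_lhs => rw [← hvw.sum_right (v k * b)]
        simp only [map_sum, map_smul, LinearMap.smul_apply, mul_assoc]
    _ = ∑ l, G (b * w l) (v l) := by
        rw [Finset.sum_comm]
        refine Finset.sum_congr rfl fun l _ => ?_
        rw [← LinearMap.sum_apply, ← map_sum, hvw.sum_left]

lemma sum_mul_ne_zero (ε : B →ₐ[L] L) {t : B} (ht : ∀ c, t * c = ε c • t) (ht_ne : ε t ≠ 0) :
    ∑ k, w k * v k ≠ 0 := by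
  have counit_eq : ε t = θ t * ε (∑ k, w k * v k) := by
    conv_lhs => rw [← hvw.sum_left t]
    simp only [mul_comm _ t, ht, map_sum, map_smul, map_mul, smul_eq_mul, Finset.mul_sum]
    exact Finset.sum_congr rfl fun k _ => by ring
  intro casimir_eq_zero
  exact ht_ne (by rw [counit_eq, casimir_eq_zero, map_zero, mul_zero])

end AreDualBases

end DualBases

/-- `Λ` is a two-sided integral of `H` with counit `1`. -/
structure IsNormalizedIntegral (F : Type*) {H : Type*} [CommRing F] [Ring H] [Bialgebra F H]
    (Λ : H) : Prop where
  mul_left : ∀ h, h * Λ = counit (R := F) h • Λ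
  mul_right : ∀ h, Λ * h = counit (R := F) h • Λ
  counit_eq_one : counit (R := F) Λ = 1

section FrobeniusAction

variable {F H L B : Type} [Field F] [Ring H] [Field L] [CommRing B] [Algebra L B] [Algebra F B]
  {Λ : H} {θ : B →ₗ[L] L}

/-- An `L`-linear action on a commutative `L`-algebra for which `Λ` acts through a nondegenerate
form `θ`, so that `B` is a Frobenius algebra over `L`. -/
structure IsFrobeniusAction [Bialgebra F H] (hB : HopfAction F H B) (Λ : H) (θ : B →ₗ[L] L) :
    Prop where
  act_smul : ∀ h (l : L) b, hB.act h (l • b) = l • hB.act h b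
  act_integral : ∀ b, hB.act Λ b = algebraMap L B (θ b)
  nondegenerate : ∀ b, (∀ c, θ (b * c) = 0) → b = 0

namespace IsFrobeniusAction

lemma eq_zero_of_forall_act_mem [Bialgebra F H] {hB : HopfAction F H B}
    (hfrob : IsFrobeniusAction hB Λ θ) {P : Ideal B} (hP : P.IsMaximal)
    {b : B} (hb : ∀ h, hB.act h b ∈ P) : b = 0 := by
  refine hfrob.nondegenerate b fun c => by_contra fun form_ne_zero => hP.ne_top ?_
  have integral_mem : hB.act Λ (b * c) ∈ P := by
    rw [hB.act_mul_eq_sum]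
    exact P.sum_mem fun i _ => P.mul_mem_right _ (hb _)
  rw [hfrob.act_integral] at integral_mem
  exact P.eq_top_of_isUnit_mem integral_mem ((IsUnit.mk0 _ form_ne_zero).map (algebraMap L B))

variable [HopfAlgebra F H] [Algebra F L] [IsScalarTower F L B] {hB : HopfAction F H B}
  (hfrob : IsFrobeniusAction hB Λ θ) (hΛ : IsNormalizedIntegral F Λ)

include hfrob hΛ

lemma form_act [Nontrivial B] (h : H) (b : B) :
    θ (hB.act h b) = counit (R := F) h • θ b := by
  apply (algebraMap L B).injective
  rw [← hfrob.act_integral, ← hB.mul_act, hΛ.mul_right, map_smul, LinearMap.smul_apply,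
    hfrob.act_integral, Algebra.smul_def (counit (R := F) h) (θ b), map_mul,
    ← IsScalarTower.algebraMap_apply, ← Algebra.smul_def]

lemma form_act_mul [Nontrivial B] (h : H) (a b : B) :
    θ (hB.act h a * b) = θ (a * hB.act (antipode F h) b) := by
  rw [← hB.sum_act_mul_act_antipode, map_sum]
  simp only [hfrob.form_act hΛ]
  exact sum_counit_left_smul_right (θ.restrictScalars F ∘ₗ LinearMap.mul F B a ∘ₗ
    hB.act.flip b ∘ₗ antipode F) h

variable {ι V : Type*} [Fintype ι] {v w : ι → B} [AddCommGroup V] [Module L V]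

lemma sum_apply_act_act [Nontrivial B] (hvw : AreDualBases θ v w) (G : B →ₗ[L] B →ₗ[L] V)
    (x y : H) :
    ∑ k, G (hB.act x (w k)) (hB.act y (v k)) =
      ∑ k, G (hB.act (x * antipode F y) (w k)) (v k) :=
  calc ∑ k, G (hB.act x (w k)) (hB.act y (v k))
      = ∑ k, ∑ l, G (hB.act x (θ (v k * hB.act (antipode F y) (w l)) • w k)) (v l) := by
        refine Finset.sum_congr rfl fun k _ => ?_
        conv_lhs => rw [← hvw.sum_right (hB.act y (v k))]
        simp only [map_sum, map_smul, hfrob.form_act_mul hΛ, hfrob.act_smul,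
          LinearMap.smul_apply]
    _ = ∑ l, G (hB.act (x * antipode F y) (w l)) (v l) := by
        rw [Finset.sum_comm]
        refine Finset.sum_congr rfl fun l _ => ?_
        rw [← LinearMap.sum_apply, ← map_sum, ← map_sum, hvw.sum_left, hB.mul_act]

lemma sum_sum_apply_act_integral [Nontrivial B] (hvw : AreDualBases θ v w)
    (G : B →ₗ[L] B →ₗ[L] V) :
    ∑ k, ∑ i ∈ (ℛ F Λ).index, G (hB.act ((ℛ F Λ).left i) (w k)) (hB.act ((ℛ F Λ).right i) (v k)) =
      ∑ k, G (w k) (v k) := by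
  rw [Finset.sum_comm]
  simp only [hfrob.sum_apply_act_act hΛ hvw G]
  rw [Finset.sum_comm]
  refine Finset.sum_congr rfl fun l _ => ?_
  simp only [← LinearMap.sum_apply, ← map_sum]
  rw [sum_mul_antipode_eq_smul, hΛ.counit_eq_one, one_smul, hB.one_act]

lemma sum_mul_eq_algebraMap [Nontrivial B] (hvw : AreDualBases θ v w) :
    ∑ k, w k * v k = algebraMap L B (θ (∑ k, w k * v k)) := by
  rw [← hfrob.act_integral, map_sum]
  simpa only [hB.act_mul_eq_sum, LinearMap.mul_apply'] using
    (hfrob.sum_sum_apply_act_integral hΛ hvw (LinearMap.mul L B)).symm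

end IsFrobeniusAction

end FrobeniusAction

section EquivariantEmbedding

variable {F H L B R : Type} [Field F] [Ring H] [HopfAlgebra F H] [Field L] [Algebra F L]
  [CommRing B] [Algebra L B] [Algebra F B] [IsScalarTower F L B]
  [Ring R] [Algebra L R] [Algebra F R] [IsScalarTower F L R]
  {hB : HopfAction F H B} {Λ : H} {θ : B →ₗ[L] L} {ha : HopfAction F H R} {j : B →ₐ[L] R}

/-- `R` as a module over the commutative algebra `B` by right multiplication through `j`. -/
abbrev rightMulModule (j : B →ₐ[L] R) : Module B R :=
  Module.compHom R ((j : B →+* R).toOpposite fun a b => (Commute.all a b).map j)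

lemma module_free_rightMulModule [FiniteDimensional F H] [Module.Finite L R]
    (hfrob : IsFrobeniusAction hB Λ θ) (hj : Function.Injective j)
    (hact : ∀ h b, j (hB.act h b) = ha.act h (j b)) :
    letI := rightMulModule j
    Module.Finite B R ∧ Module.Free B R := by
  let := rightMulModule j
  have : Module.Finite L B := .of_injective j.toLinearMap hj
  have : IsArtinianRing B := .of_finite L B
  have : IsScalarTower L B R := ⟨fun l b r => by
    change r * j (l • b) = l • (r * j b)
    rw [map_smul, mul_smul_comm]⟩
  have : IsScalarTower F B R := .of_algebraMap_smul fun c r => by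
    change r * j (algebraMap F B c) = c • r
    rw [IsScalarTower.algebraMap_apply F L B, AlgHom.commutes, ← Algebra.commutes,
      ← IsScalarTower.algebraMap_apply, ← Algebra.smul_def]
  have : Module.Finite B R := .of_restrictScalars_finite L B R
  exact ⟨this, module_free_of_isCompatibleAction (actB := hB.act)
    { one_act := ha.one_act
      mul_act := ha.mul_act
      act_smul := fun h b r => by
        change ha.act h (r * j b) = ∑ i ∈ _, _ * j _
        simp only [ha.act_mul_eq_sum, hact] }
    fun P hP b hb => hfrob.eq_zero_of_forall_act_mem hP hb⟩

lemma exists_integral_of_equivariant_embedding [FiniteDimensional F H] [Module.Finite L R]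
    (hfrob : IsFrobeniusAction hB Λ θ) (hj : Function.Injective j)
    (hact : ∀ h b, j (hB.act h b) = ha.act h (j b))
    (ε : R →ₐ[L] L) {t : R} (ht : ∀ r, t * r = ε r • t) (ht_ne : ε t ≠ 0) :
    ∃ b : B, (∀ c, b * c = ε (j c) • b) ∧ ε (j b) ≠ 0 := by
  let := rightMulModule j
  obtain ⟨_, _⟩ := module_free_rightMulModule hfrob hj hact
  let e := Module.Free.chooseBasis B R
  have coeff_integral (i) (c : B) : e.repr t i * c = ε (j c) • e.repr t i := by
    have smul_eq : c • t = algebraMap L B (ε (j c)) • t := by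
      change t * j c = t * j (algebraMap L B (ε (j c)))
      rw [ht, AlgHom.commutes, ← Algebra.commutes, ← Algebra.smul_def]
    simpa [mul_comm c, Algebra.smul_def] using congrArg (fun r => e.repr r i) smul_eq
  obtain ⟨i, hi⟩ : ∃ i, ε (j (e.repr t i)) ≠ 0 := by
    by_contra! coeff_eq_zero
    refine ht_ne ?_
    rw [← e.sum_repr t, map_sum]
    refine Finset.sum_eq_zero fun i _ => ?_
    change ε (e i * j (e.repr t i)) = 0
    rw [map_mul, coeff_eq_zero, mul_zero]
  exact ⟨_, coeff_integral i, hi⟩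

end EquivariantEmbedding

section Derivation

variable {F H L B R : Type} [Field F] [Ring H] [HopfAlgebra F H] [Field L] [Algebra F L]
  [CommRing B] [Algebra L B] [Algebra F B] [IsScalarTower F L B]
  [Ring R] [Algebra L R] [Algebra F R]
  {hB : HopfAction F H B} {Λ : H} {θ : B →ₗ[L] L} {ha : HopfAction F H R} {j : B →ₐ[L] R}

/-- `δ` is a derivation of the `L`-algebra `R` extending the derivation `δL` of `L`. -/
structure IsDerivationOver (δL : L → L) (δ : R →+ R) : Prop where
  map_mul : ∀ r s, δ (r * s) = δ r * s + r * δ s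
  map_smul : ∀ (l : L) r, δ (l • r) = δL l • r + l • δ r

variable {δL : L → L} {δ : R →+ R}

/-- The `L`-bilinear map `(a, b) ↦ j a * δ (j b)` modulo `j(B)`. It is linear in `b` because
`δL l • (j a * j b)` vanishes in the quotient. -/
noncomputable def derivationPairing (hδ : IsDerivationOver δL δ) (j : B →ₐ[L] R) :
    B →ₗ[L] B →ₗ[L] R ⧸ j.range.toSubmodule :=
  LinearMap.mk₂ L (fun a b => j.range.toSubmodule.mkQ (j a * δ (j b)))
    (fun a a' b => by rw [map_add, add_mul, map_add])
    (fun l a b => by rw [map_smul, smul_mul_assoc, map_smul])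
    (fun a b b' => by rw [map_add, map_add, mul_add, map_add])
    (fun l a b => by
      have mul_mem : j.range.toSubmodule.mkQ (j a * j b) = 0 :=
        (Submodule.Quotient.mk_eq_zero _).2 ⟨a * b, map_mul j a b⟩
      rw [map_smul, hδ.map_smul, mul_add, mul_smul_comm, mul_smul_comm, map_add, map_smul,
        map_smul, mul_mem, smul_zero, zero_add])

lemma derivationPairing_apply (hδ : IsDerivationOver δL δ) (a b : B) :
    derivationPairing hδ j a b = j.range.toSubmodule.mkQ (j a * δ (j b)) := rfl

variable {ι : Type*} [Fintype ι] {v w : ι → B}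

lemma sum_mul_derivation_mem_range [Nontrivial B] (hδ : IsDerivationOver δL δ)
    (hΛ : IsNormalizedIntegral F Λ)
    (hfrob : IsFrobeniusAction hB Λ θ) (hvw : AreDualBases θ v w)
    (hact : ∀ h b, j (hB.act h b) = ha.act h (j b))
    (hΛR : ∀ r, ha.act Λ r ∈ (⊥ : Subalgebra L R))
    (hδact : ∀ h r, δ (ha.act h r) = ha.act h (δ r)) :
    ∑ k, j (w k) * δ (j (v k)) ∈ j.range := by
  have mkQ_act : j.range.toSubmodule.mkQ (ha.act Λ (∑ k, j (w k) * δ (j (v k)))) =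
      j.range.toSubmodule.mkQ (∑ k, j (w k) * δ (j (v k))) := by
    simpa only [map_sum, ha.act_mul_eq_sum, derivationPairing_apply, hact, hδact] using
      hfrob.sum_sum_apply_act_integral hΛ hvw (derivationPairing hδ j)
  have mkQ_eq_zero := (Submodule.Quotient.mk_eq_zero j.range.toSubmodule).2
    ((bot_le : (⊥ : Subalgebra L R) ≤ j.range) (hΛR (∑ k, j (w k) * δ (j (v k)))))
  exact (Submodule.Quotient.mk_eq_zero _).1 (mkQ_act.symm.trans mkQ_eq_zero)

-- With `x = ∑ j (w k) * δ (j (v k))`, the Casimir identity reads `x * j b + z * δ (j b) = j b * x`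
-- modulo `j(B)`, where `z = ∑ w k * v k`; as `x ∈ j(B)`, so is `δ (j b)` if `z` is invertible.
lemma derivation_apply_mem_range [Nontrivial B] (hδ : IsDerivationOver δL δ)
    (hΛ : IsNormalizedIntegral F Λ)
    (hfrob : IsFrobeniusAction hB Λ θ) (hvw : AreDualBases θ v w) (hne : ∑ k, w k * v k ≠ 0)
    (hact : ∀ h b, j (hB.act h b) = ha.act h (j b))
    (hΛR : ∀ r, ha.act Λ r ∈ (⊥ : Subalgebra L R))
    (hδact : ∀ h r, δ (ha.act h r) = ha.act h (δ r)) (b : B) :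
    δ (j b) ∈ j.range := by
  have x_mem := sum_mul_derivation_mem_range hδ hΛ hfrob hvw hact hΛR hδact
  have mkQ_eq_zero {r : R} (hr : r ∈ j.range) : j.range.toSubmodule.mkQ r = 0 :=
    (Submodule.Quotient.mk_eq_zero _).2 hr
  have left_eq : ∑ k, derivationPairing hδ j (w k) (v k * b) =
      j.range.toSubmodule.mkQ ((∑ k, j (w k) * δ (j (v k))) * j b) +
        j.range.toSubmodule.mkQ (j (∑ k, w k * v k) * δ (j b)) := by
    simp only [derivationPairing_apply, Finset.sum_mul, map_sum, map_mul, hδ.map_mul, mul_add,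
      map_add, Finset.sum_add_distrib, mul_assoc]
  have right_eq : ∑ k, derivationPairing hδ j (b * w k) (v k) =
      j.range.toSubmodule.mkQ (j b * ∑ k, j (w k) * δ (j (v k))) := by
    simp only [derivationPairing_apply, Finset.mul_sum, map_sum, map_mul, mul_assoc]
  have casimir_ne_zero : θ (∑ k, w k * v k) ≠ 0 := fun h0 =>
    hne (by rw [hfrob.sum_mul_eq_algebraMap hΛ hvw, h0, map_zero])
  have casimir := hvw.sum_apply_mul_right (derivationPairing hδ j) b
  rw [left_eq, right_eq, mkQ_eq_zero (mul_mem x_mem (j.mem_range_self b)),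
    mkQ_eq_zero (mul_mem (j.mem_range_self b) x_mem), zero_add,
    hfrob.sum_mul_eq_algebraMap hΛ hvw, AlgHom.commutes, ← Algebra.smul_def, map_smul,
    smul_eq_zero_iff_right casimir_ne_zero] at casimir
  exact (Submodule.Quotient.mk_eq_zero _).1 casimir

end Derivation

section Integral

variable {F : Type*} [Field F]

lemma exists_left_integral {A : Type*} [Ring A] [Algebra F A] [IsSemisimpleRing A]
    (ε : A →ₐ[F] F) : ∃ Λ : A, (∀ a, a * Λ = ε a • Λ) ∧ ε Λ = 1 := by
  let I : Ideal A := RingHom.ker ε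
  obtain ⟨J, hIJ⟩ := exists_isCompl I
  obtain ⟨k, hk, Λ, hΛ, k_add_Λ⟩ :=
    Submodule.mem_sup.1 (hIJ.sup_eq_top ▸ Submodule.mem_top : (1 : A) ∈ I ⊔ J)
  refine ⟨Λ, fun a => sub_eq_zero.1 ?_, ?_⟩
  · refine Submodule.disjoint_def.1 hIJ.disjoint _ ?_ (J.sub_mem (J.mul_mem_left a hΛ) ?_)
    · simp [I]
    · exact Algebra.smul_def (ε a) Λ ▸ J.mul_mem_left _ hΛ
  · rw [← map_one ε, ← k_add_Λ, map_add, (RingHom.mem_ker).1 hk, zero_add]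

lemma exists_isNormalizedIntegral {H : Type*} [Ring H] [Bialgebra F H] [IsSemisimpleRing H] :
    ∃ Λ : H, IsNormalizedIntegral F Λ := by
  obtain ⟨Λ, left_integral, counit_Λ⟩ := exists_left_integral (Bialgebra.counitAlgHom F H)
  obtain ⟨Γ, right_integral, counit_Γ⟩ := exists_left_integral
    ((Bialgebra.counitAlgHom F H).fromOpposite fun a b => Commute.all _ _)
  replace right_integral (h : H) : Γ.unop * h = counit (R := F) h • Γ.unop :=
    congrArg MulOpposite.unop (right_integral (.op h))
  replace counit_Γ : counit (R := F) Γ.unop = 1 := counit_Γ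
  simp only [Bialgebra.counitAlgHom_apply] at left_integral counit_Λ
  obtain rfl : Γ.unop = Λ := by
    simpa [counit_Λ, counit_Γ] using (right_integral Λ).symm.trans (left_integral Γ.unop)
  exact ⟨_, left_integral, right_integral, counit_Γ⟩

end Integral

section ConvAlg

/-- The convolution algebra of linear maps `H → L`. -/
abbrev ConvAlg (F H L : Type*) [CommRing F] [Ring H] [Bialgebra F H] [CommRing L] [Algebra F L] :
    Type _ :=
  WithConv (H →ₗ[F] L)

namespace ConvAlg

variable {F H L : Type*} [CommRing F] [Ring H] [Bialgebra F H] [CommRing L] [Algebra F L]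

lemma ext {f g : ConvAlg F H L} (h : ∀ x, f.ofConv x = g.ofConv x) : f = g :=
  WithConv.ext (LinearMap.ext h)

lemma mul_apply (f g : ConvAlg F H L) (h : H) : (f * g).ofConv h =
    ∑ i ∈ (ℛ F h).index, f.ofConv ((ℛ F h).left i) * g.ofConv ((ℛ F h).right i) :=
  (ℛ F h).convMul_apply f g

lemma algebraMap_apply (l : L) (h : H) :
    (algebraMap L (ConvAlg F H L) l).ofConv h = counit (R := F) h • l := by
  rw [LinearMap.convAlgebraMap_apply, Algebra.smul_def (counit (R := F) h), smul_eq_mul, mul_comm]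

instance {R S : Type*} [CommSemiring R] [CommSemiring S] [SMul R S] [Module R L] [Module S L]
    [SMulCommClass F R L] [SMulCommClass F S L] [IsScalarTower R S L] :
    IsScalarTower R S (ConvAlg F H L) :=
  ⟨fun a b f => ext fun x => by simp⟩

variable (L) in
/-- Evaluation at an element of `H`. -/
def eval (h : H) : ConvAlg F H L →ₗ[L] L where
  toFun f := f.ofConv h
  map_add' _ _ := rfl
  map_smul' _ _ := rfl

@[simp]
lemma eval_apply (h : H) (f : ConvAlg F H L) : eval L h f = f.ofConv h := rfl

/-- Evaluation at `1`, the counit of the convolution algebra. -/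
noncomputable def evalOne : ConvAlg F H L →ₐ[L] L :=
  .ofLinearMap (eval L 1) (by simp) fun f g => by simp [Algebra.TensorProduct.one_def]

@[simp]
lemma evalOne_apply (f : ConvAlg F H L) : evalOne f = f.ofConv 1 := rfl

/-- Composition with a linear map of coefficients. -/
def postcomp {M : Type*} [CommRing M] [Algebra F M] (φ : L →ₗ[F] M) :
    ConvAlg F H L →ₗ[F] ConvAlg F H M where
  toFun f := toConv (φ ∘ₗ f.ofConv)
  map_add' f g := ext fun x => by simp
  map_smul' c f := ext fun x => by simp

@[simp]
lemma postcomp_apply {M : Type*} [CommRing M] [Algebra F M] (φ : L →ₗ[F] M) (f : ConvAlg F H L)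
    (h : H) : (postcomp φ f).ofConv h = φ (f.ofConv h) := rfl

lemma isDerivationOver_postcomp {F H L : Type} [CommRing F] [Ring H] [Bialgebra F H] [Field L]
    [Algebra F L] (δ : Derivation F L L) :
    IsDerivationOver δ (postcomp (H := H) δ.toLinearMap).toAddMonoidHom where
  map_mul f g := ext fun x => by
    simp [mul_apply, ← Finset.sum_add_distrib, -LinearMap.convMul_apply, add_comm, mul_comm]
  map_smul l f := ext fun x => by simp [add_comm, mul_comm]

end ConvAlg

end ConvAlg

section Translation

variable {F H L : Type} [CommRing F] [Ring H] [Bialgebra F H] [CommRing L] [Algebra F L]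

lemma comul_mul_eq_sum (x h : H) : (comul (x * h) : H ⊗[F] H) =
    ∑ i ∈ (ℛ F h).index, ∑ j ∈ (ℛ F x).index,
      ((ℛ F x).left j * (ℛ F h).left i) ⊗ₜ[F] ((ℛ F x).right j * (ℛ F h).right i) := by
  conv_lhs => rw [Bialgebra.comul_mul, ← (ℛ F h).eq, ← (ℛ F x).eq, Finset.sum_mul_sum]
  rw [Finset.sum_comm]
  simp only [Algebra.TensorProduct.tmul_mul_tmul]

variable (F H L) in
/-- The action of `H` on its convolution algebra by translation, `(h · f) x = f (x * h)`. -/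
noncomputable def translationAction : HopfAction F H (ConvAlg F H L) where
  act := LinearMap.mk₂ F (fun h f => toConv (f.ofConv ∘ₗ LinearMap.mulRight F h))
    (fun _ _ _ => ConvAlg.ext fun x => by simp [mul_add])
    (fun _ _ _ => ConvAlg.ext fun x => by simp)
    (fun _ _ _ => ConvAlg.ext fun x => by simp)
    (fun _ _ _ => ConvAlg.ext fun x => by simp)
  one_act f := ConvAlg.ext fun x => by simp
  mul_act g h f := ConvAlg.ext fun x => by simp [mul_assoc]
  act_one h := ConvAlg.ext fun x => by simp [mul_comm, Algebra.smul_def]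
  act_mul h f g := ConvAlg.ext fun x => by
    rw [LinearMap.mk₂_apply, ofConv_toConv, LinearMap.comp_apply, LinearMap.mulRight_apply,
      LinearMap.convMul_apply, comul_mul_eq_sum, ← (ℛ F h).eq]
    simp [map_sum, ConvAlg.mul_apply, -LinearMap.convMul_apply]

@[simp]
lemma translationAction_act_apply (h x : H) (f : ConvAlg F H L) :
    ((translationAction F H L).act h f).ofConv x = f.ofConv (x * h) := rfl

lemma translationAction_act_integral {Λ : H} (hΛ : IsNormalizedIntegral F Λ)
    (f : ConvAlg F H L) :
    (translationAction F H L).act Λ f = algebraMap L (ConvAlg F H L) (f.ofConv Λ) :=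
  ConvAlg.ext fun x => by
    rw [translationAction_act_apply, hΛ.mul_left, map_smul, ConvAlg.algebraMap_apply]

end Translation

section Restriction

variable {F H A S : Type} [CommRing F] [Ring H] [Bialgebra F H] [Ring A] [Algebra F A]
  [CommRing S] [Algebra F S] [Algebra S A] [IsScalarTower F S A]

/-- The restriction of an action to a stable subalgebra. -/
noncomputable def HopfAction.restrict (ha : HopfAction F H A) (B : Subalgebra S A)
    (hB : ∀ h, ∀ b ∈ B, ha.act h b ∈ B) : HopfAction F H B where
  act := LinearMap.mk₂ F (fun h b => ⟨ha.act h b, hB h b b.2⟩)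
    (fun _ _ _ => Subtype.ext (by simp))
    (fun _ _ _ => Subtype.ext (by simp))
    (fun _ _ _ => Subtype.ext (by simp))
    (fun _ _ _ => Subtype.ext (by simp))
  one_act b := Subtype.ext (ha.one_act b)
  mul_act g h b := Subtype.ext (ha.mul_act g h b)
  act_one h := Subtype.ext (ha.act_one h)
  act_mul h b c := Subtype.ext <| by
    refine (ha.act_mul_eq_sum h b c).trans ?_
    rw [← (ℛ F h).eq]
    simp

end Restriction

section FrobeniusSubalgebra

variable {F H L : Type} [Field F] [Ring H] [HopfAlgebra F H] [Field L] [Algebra F L]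

/-- A commutative subalgebra of the convolution algebra, stable under translations, on which
evaluation at `Λ` is a nondegenerate form. -/
structure IsFrobeniusSubalgebra (Λ : H) (B : Subalgebra L (ConvAlg F H L)) : Prop where
  mul_comm : ∀ f ∈ B, ∀ g ∈ B, f * g = g * f
  act_mem : ∀ h, ∀ f ∈ B, (translationAction F H L).act h f ∈ B
  nondegenerate : ∀ f ∈ B, (∀ g ∈ B, (f * g).ofConv Λ = 0) → f = 0

lemma toConv_integral_mul {lam : H →ₗ[F] F}
    (hlam : ∀ h : H, TensorProduct.lid F H (LinearMap.rTensor H lam (comul h)) = lam h • 1)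
    (f : ConvAlg F H L) :
    toConv (Algebra.linearMap F L ∘ₗ lam) * f =
      ConvAlg.evalOne f • toConv (Algebra.linearMap F L ∘ₗ lam) := by
  refine ConvAlg.ext fun h => ?_
  have apply_eq := congrArg f.ofConv (hlam h)
  rw [← (ℛ F h).eq] at apply_eq
  simp only [map_sum, LinearMap.rTensor_tmul, TensorProduct.lid_tmul, map_smul] at apply_eq
  rw [ConvAlg.mul_apply]
  simp only [LinearMap.comp_apply, Algebra.linearMap_apply, ← Algebra.smul_def, apply_eq,
    ofConv_smul, LinearMap.smul_apply, ConvAlg.evalOne_apply, smul_eq_mul]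
  rw [Algebra.smul_def, mul_comm]

lemma IsFrobeniusSubalgebra.postcomp_derivation_mem [FiniteDimensional F H] {Λ : H}
    {B : Subalgebra L (ConvAlg F H L)} (hB : IsFrobeniusSubalgebra Λ B)
    (hΛ : IsNormalizedIntegral F Λ) (hH : IsCosemisimple F H) (δ : Derivation F L L)
    {f : ConvAlg F H L} (hf : f ∈ B) : ConvAlg.postcomp δ.toLinearMap f ∈ B := by
  let : CommRing B := { B.toRing with mul_comm f g := Subtype.ext (hB.mul_comm f f.2 g g.2) }
  let : Algebra L B := B.algebra
  have : Module.Finite L (ConvAlg F H L) := .equiv (WithConv.linearEquiv L (H →ₗ[F] L)).symm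
  have : Nontrivial (ConvAlg F H L) :=
    (ConvAlg.evalOne (F := F) (H := H)).toRingHom.domain_nontrivial
  let hBact : HopfAction F H B := (translationAction F H L).restrict B hB.act_mem
  have hfrob : IsFrobeniusAction hBact Λ (ConvAlg.eval L Λ ∘ₗ B.val.toLinearMap) :=
    { act_smul := fun h l b => rfl
      act_integral := fun b => Subtype.ext (translationAction_act_integral hΛ b.1)
      nondegenerate := fun b hb =>
        Subtype.ext (hB.nondegenerate b.1 b.2 fun c hc => hb ⟨c, hc⟩) }
  obtain ⟨lam, lam_one, -, hlam⟩ := hH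
  obtain ⟨t, ht, ht_ne⟩ := exists_integral_of_equivariant_embedding (ha := translationAction F H L)
    (j := B.val) hfrob Subtype.val_injective (fun h b => rfl) ConvAlg.evalOne
    (toConv_integral_mul hlam) (by simp [lam_one])
  obtain ⟨n, v, w, hvw⟩ := exists_areDualBases hfrob.nondegenerate
  obtain ⟨g, hg⟩ := derivation_apply_mem_range (ConvAlg.isDerivationOver_postcomp δ) hΛ hfrob hvw
    (j := B.val) (hvw.sum_mul_ne_zero (ConvAlg.evalOne.comp B.val) ht ht_ne) (fun h b => rfl)
    (fun r => ⟨_, (translationAction_act_integral hΛ r).symm⟩) (fun h r => rfl) ⟨f, hf⟩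
  exact hg ▸ g.2

end FrobeniusSubalgebra

section Derivation

lemma surjective_algebraMap_of_forall_derivation_eq_zero {F K : Type*} [Field F] [IsAlgClosed F]
    [Field K] [Algebra F K] [Algebra.EssFiniteType F K] (h : ∀ δ : Derivation F K K, δ = 0) :
    Function.Surjective (algebraMap F K) := by
  have : Subsingleton (Module.Dual K Ω[K⁄F]) :=
    (KaehlerDifferential.linearMapEquivDerivation F K).toEquiv.subsingleton_congr.2
      ⟨fun δ δ' => (h δ).trans (h δ').symm⟩
  have : Algebra.FormallyUnramified F K := ⟨Module.subsingleton_dual_iff K |>.1 this⟩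
  have : Algebra.IsSeparable F K := (Algebra.FormallyUnramified.iff_isSeparable F K).1 this
  exact IsAlgClosed.algebraMap_bijective_of_isIntegral.2

lemma derivation_eq_zero_of_forall_adjoin {F L M : Type*} [Field F] [Field L] [Algebra F L]
    {S : Set L} [AddCommGroup M] [Module F M] [Module (IntermediateField.adjoin F S) M]
    (δ : Derivation F (IntermediateField.adjoin F S) M)
    (h : ∀ x (hx : x ∈ S), δ ⟨x, IntermediateField.subset_adjoin F S hx⟩ = 0) : δ = 0 := by
  ext ⟨x, hx⟩
  change δ ⟨x, hx⟩ = 0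
  induction hx using IntermediateField.adjoin_induction with
  | mem x hx => exact h x hx
  | algebraMap x => exact δ.map_algebraMap x
  | add x y hx hy δx δy => simpa [δx, δy] using δ.map_add ⟨x, hx⟩ ⟨y, hy⟩
  | inv x hx δx => exact (δ.leibniz_inv ⟨x, hx⟩).trans (by rw [δx, smul_zero])
  | mul x y hx hy δx δy => simpa [δx, δy] using δ.leibniz ⟨x, hx⟩ ⟨y, hy⟩

end Derivation

lemma exists_basis_repr_eq_of_separating {L V : Type*} {ι : Type} [Field L] [AddCommGroup V]
    [Module L V] [Module.Finite L V] (ev : ι → Module.Dual L V)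
    (separating : ∀ x, (∀ i, ev i x = 0) → x = 0) :
    ∃ (κ : Type) (_ : Finite κ) (a : κ → ι) (v : Module.Basis κ L V),
      ∀ x i, v.repr x i = ev (a i) x := by
  classical
  obtain ⟨κ, a, -, span_eq, hli⟩ := exists_linearIndependent' L ev
  have coannihilator_eq : (Submodule.span L (Set.range ev)).dualCoannihilator = ⊥ :=
    (Submodule.eq_bot_iff _).2 fun x hx => separating x fun i =>
      (Submodule.mem_dualCoannihilator x).1 hx _ (Submodule.subset_span ⟨i, rfl⟩)
  have span_top : ⊤ ≤ Submodule.span L (Set.range (ev ∘ a)) := by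
    rw [span_eq, ← Subspace.dualCoannihilator_dualAnnihilator_eq (W := Submodule.span L _),
      coannihilator_eq, Submodule.dualAnnihilator_bot]
  let φ := Module.Basis.mk hli span_top
  have : Finite κ := Module.Finite.finite_basis φ
  exact ⟨κ, this, a, φ.dualBasis.map (Module.evalEquiv L V).symm, fun x i => by simp [φ]⟩

section CoeffMap

variable {F H K L : Type*} [CommRing F] [Ring H] [Bialgebra F H] [CommRing K] [Algebra F K]
  [CommRing L] [Algebra F L] [Algebra K L] [IsScalarTower F K L]

variable (F H K L) in
/-- Extension of coefficients of the convolution algebra along `K → L`. -/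
noncomputable def ConvAlg.coeffMap : ConvAlg F H K →ₐ[K] ConvAlg F H L where
  toFun := ConvAlg.postcomp (IsScalarTower.toAlgHom F K L).toLinearMap
  map_one' := ConvAlg.ext fun x => by simp
  map_mul' f g :=
    WithConv.ext (LinearMap.algHom_comp_convMul_distrib (IsScalarTower.toAlgHom F K L) f g)
  map_zero' := map_zero _
  map_add' := map_add _
  commutes' c := ConvAlg.ext fun x => by simp [← IsScalarTower.algebraMap_apply, Algebra.smul_def]

namespace ConvAlg

@[simp]
lemma coeffMap_apply (f : ConvAlg F H K) (h : H) :
    (coeffMap F H K L f).ofConv h = algebraMap K L (f.ofConv h) := rfl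

lemma coeffMap_injective [FaithfulSMul K L] : Function.Injective (coeffMap F H K L) :=
  fun f g hfg => ext fun x => FaithfulSMul.algebraMap_injective K L <| by
    rw [← coeffMap_apply, hfg, coeffMap_apply]

lemma mem_range_coeffMap_of_forall [FaithfulSMul K L] {f : ConvAlg F H L}
    (hf : ∀ h, f.ofConv h ∈ Set.range (algebraMap K L)) : f ∈ (coeffMap F H K L).range := by
  let ι := (IsScalarTower.toAlgHom F K L).toLinearMap
  have hι : Function.Injective ι := FaithfulSMul.algebraMap_injective K L
  refine ⟨toConv ((LinearEquiv.ofInjective ι hι).symm.toLinearMap ∘ₗ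
    f.ofConv.codRestrict (LinearMap.range ι) hf), ext fun x => ?_⟩
  exact congrArg Subtype.val ((LinearEquiv.ofInjective ι hι).apply_symm_apply _)

end ConvAlg

variable (K) in
/-- `B` is spanned by its elements with values in `K`. -/
def IsDefinedOver (B : Subalgebra L (ConvAlg F H L)) : Prop :=
  Subalgebra.toSubmodule B ≤ Submodule.span L (B ∩ Set.range (ConvAlg.coeffMap F H K L))

lemma IsDefinedOver.toSubmodule_le {B : Subalgebra L (ConvAlg F H L)} (hK : IsDefinedOver K B)
    {M : Submodule L (ConvAlg F H L)}
    (hM : ∀ f, ConvAlg.coeffMap F H K L f ∈ B → ConvAlg.coeffMap F H K L f ∈ M) :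
    B.toSubmodule ≤ M :=
  hK.trans <| Submodule.span_le.2 <| by
    rintro _ ⟨hf, f, rfl⟩
    exact hM f hf

lemma isDefinedOver_of_basis [FaithfulSMul K L] {κ : Type*} {B : Subalgebra L (ConvAlg F H L)}
    (v : Module.Basis κ L B) (hv : ∀ i h, (v i).1.ofConv h ∈ Set.range (algebraMap K L)) :
    IsDefinedOver K B := by
  intro f hf
  have mem_span := Submodule.mem_map_of_mem (f := B.val.toLinearMap) (v.mem_span ⟨f, hf⟩)
  rw [Submodule.map_span, ← Set.range_comp] at mem_span
  refine Submodule.span_mono ?_ mem_span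
  rintro _ ⟨i, rfl⟩
  exact ⟨(v i).2, ConvAlg.mem_range_coeffMap_of_forall (hv i)⟩

end CoeffMap

section Descent

variable {F H K L : Type} [Field F] [Ring H] [HopfAlgebra F H] [Field L] [Algebra F L] {Λ : H}
  {B : Subalgebra L (ConvAlg F H L)}

namespace IsFrobeniusSubalgebra

lemma comap_coeffMap [Field K] [Algebra F K] [Algebra K L] [IsScalarTower F K L]
    (hB : IsFrobeniusSubalgebra Λ B) (hK : IsDefinedOver K B) :
    IsFrobeniusSubalgebra Λ ((B.restrictScalars K).comap (ConvAlg.coeffMap F H K L)) where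
  mul_comm f hf g hg := ConvAlg.coeffMap_injective (L := L) <| by
    rw [map_mul, map_mul]
    exact hB.mul_comm _ hf _ hg
  act_mem h f hf := hB.act_mem h _ hf
  nondegenerate f hf hfg := ConvAlg.coeffMap_injective (L := L) <| by
    rw [map_zero]
    refine hB.nondegenerate _ hf fun g hg => ?_
    refine hK.toSubmodule_le (M := LinearMap.ker
      (ConvAlg.eval L Λ ∘ₗ LinearMap.mulLeft L (ConvAlg.coeffMap F H K L f))) (fun g hg => ?_) hg
    change (ConvAlg.coeffMap F H K L f * ConvAlg.coeffMap F H K L g).ofConv Λ = 0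
    rw [← map_mul, ConvAlg.coeffMap_apply, hfg g hg, map_zero]

variable [FiniteDimensional F H]

lemma derivation_apply_eq_zero [Field K] [Algebra F K] [Algebra K L] [IsScalarTower F K L]
    (hB : IsFrobeniusSubalgebra Λ B) (hΛ : IsNormalizedIntegral F Λ) (hH : IsCosemisimple F H)
    {κ : Type*} {v : Module.Basis κ L B} {x : κ → H} (hv : ∀ f i, v.repr f i = f.1.ofConv (x i))
    (hK : IsDefinedOver K B) (δ : Derivation F K K) (i : κ) {f : ConvAlg F H K}
    (hf : ConvAlg.coeffMap F H K L f = v i) (h : H) : δ (f.ofConv h) = 0 := by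
  have mem_B : ConvAlg.coeffMap F H K L (ConvAlg.postcomp δ.toLinearMap f) ∈ B :=
    (hB.comap_coeffMap hK).postcomp_derivation_mem hΛ hH δ
      (show ConvAlg.coeffMap F H K L f ∈ B from hf ▸ (v i).2)
  have apply_x (l : κ) : f.ofConv (x l) = Finsupp.single i 1 l := by
    apply (algebraMap K L).injective
    classical
    rw [← ConvAlg.coeffMap_apply, hf, ← hv, v.repr_self, Finsupp.single_apply,
      Finsupp.single_apply]
    split_ifs <;> simp
  have eq_zero : (⟨_, mem_B⟩ : B) = 0 := v.ext_elem fun l => by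
    classical
    simp only [hv, ConvAlg.coeffMap_apply, ConvAlg.postcomp_apply, apply_x, Finsupp.single_apply]
    split_ifs <;> simp
  apply (algebraMap K L).injective
  rw [map_zero]
  exact LinearMap.congr_fun (congrArg ofConv (congrArg Subtype.val eq_zero)) h

theorem isDefinedOver_base [IsAlgClosed F] (hB : IsFrobeniusSubalgebra Λ B)
    (hΛ : IsNormalizedIntegral F Λ) (hH : IsCosemisimple F H) : IsDefinedOver F B := by
  have : Module.Finite L (ConvAlg F H L) := .equiv (WithConv.linearEquiv L (H →ₗ[F] L)).symm
  let e := Module.finBasis F H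
  obtain ⟨κ, _, a, v, hv⟩ := exists_basis_repr_eq_of_separating (V := B)
    (fun i => ConvAlg.eval L (e i) ∘ₗ B.val.toLinearMap)
    fun f hf => Subtype.ext (WithConv.ext (e.ext hf))
  let S : Set L := Set.range fun p : κ × Fin (Module.finrank F H) => (v p.1).1.ofConv (e p.2)
  let K := IntermediateField.adjoin F S
  have apply_mem_K (i) (h : H) : (v i).1.ofConv h ∈ K := by
    rw [← e.sum_repr h, map_sum]
    refine sum_mem fun s _ => ?_
    rw [map_smul]
    exact K.smul_mem (IntermediateField.subset_adjoin F S ⟨(i, s), rfl⟩)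
  have hK : IsDefinedOver K B := isDefinedOver_of_basis v fun i h => ⟨⟨_, apply_mem_K i h⟩, rfl⟩
  have S_finite : S.Finite := Set.finite_range _
  have : Algebra.EssFiniteType F K :=
    IntermediateField.essFiniteType_iff.2 ⟨S_finite.toFinset, by simp [K]⟩
  have K_surjective : Function.Surjective (algebraMap F K) :=
    surjective_algebraMap_of_forall_derivation_eq_zero fun δ =>
      derivation_eq_zero_of_forall_adjoin δ <| by
        rintro _ ⟨⟨i, s⟩, rfl⟩
        obtain ⟨f, hf⟩ := ConvAlg.mem_range_coeffMap_of_forall (K := K) (f := (v i).1) fun h =>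
          ⟨⟨_, apply_mem_K i h⟩, rfl⟩
        have apply_eq : f.ofConv (e s) = ⟨(v i).1.ofConv (e s), apply_mem_K i (e s)⟩ :=
          Subtype.ext (LinearMap.congr_fun (congrArg ofConv hf) (e s))
        rw [← hB.derivation_apply_eq_zero hΛ hH hv hK δ i hf (e s), apply_eq]
  refine isDefinedOver_of_basis v fun i h => ?_
  obtain ⟨c, hc⟩ := K_surjective ⟨_, apply_mem_K i h⟩
  exact ⟨c, congrArg Subtype.val hc⟩

end IsFrobeniusSubalgebra

end Descent

namespace HopfAction

variable {F H A : Type} [Field F] [Ring H] [HopfAlgebra F H] [DivisionRing A] [Algebra F A]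

/-- The invariants of an action on a division ring, as a division subring. -/
def invariantSubfield (ha : HopfAction F H A) : Subfield A where
  carrier := ha.invariants
  mul_mem' {a b} a_mem b_mem h := by
    rw [act_mul_of_left_mem_invariants ha a_mem, b_mem, mul_smul_comm]
  one_mem' h := by rw [ha.act_one, Algebra.algebraMap_eq_smul_one]
  add_mem' {a b} a_mem b_mem h := by rw [map_add, a_mem, b_mem, smul_add]
  zero_mem' h := by simp
  neg_mem' {a} a_mem h := by rw [map_neg, a_mem, smul_neg]
  inv_mem' a a_mem h := by
    obtain rfl | a_ne := eq_or_ne a 0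
    · simp
    apply mul_left_cancel₀ a_ne
    rw [← act_mul_of_left_mem_invariants ha a_mem, mul_smul_comm, mul_inv_cancel₀ a_ne, ha.act_one,
      Algebra.algebraMap_eq_smul_one]

variable {ha : HopfAction F H A} {ι : Type*}

lemma sum_act_mul_act_eq_zero {s : Finset ι} {a c : ι → A}
    (hc : ∀ h, ∑ j ∈ s, c j * ha.act h (a j) = 0) (g h : H) :
    ∑ j ∈ s, ha.act g (c j) * ha.act h (a j) = 0 := by
  simp only [← sum_act_mul_act_antipode]
  rw [Finset.sum_comm]
  refine Finset.sum_eq_zero fun i _ => ?_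
  simp only [← map_sum, ← ha.mul_act, hc, map_zero]

-- Artin's argument: a shortest relation with a coefficient `1` has invariant coefficients.
lemma linearIndependent_act {a : ι → A} (hli : LinearIndependent ha.invariantSubfield a) :
    LinearIndependent A fun j h => ha.act h (a j) := by
  classical
  rw [linearIndependent_iff']
  intro s
  induction s using Finset.induction_on with
  | empty => simp
  | insert k s hk ih =>
    intro c hc
    replace hc (h) : ∑ j ∈ insert k s, c j * ha.act h (a j) = 0 := by simpa using congrFun hc h
    have ck_eq : c k = 0 := by
      by_contra ck_ne
      let b (j : ι) : A := (c k)⁻¹ * c j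
      have bk_eq : b k = 1 := inv_mul_cancel₀ ck_ne
      have hb (h) : ∑ j ∈ insert k s, b j * ha.act h (a j) = 0 := by
        simp only [b, mul_assoc, ← Finset.mul_sum, hc, mul_zero]
      have b_mem : ∀ j ∈ insert k s, b j ∈ ha.invariantSubfield := by
        refine Finset.forall_mem_insert _ _ _ |>.2 ⟨bk_eq ▸ one_mem _, fun j hj g => ?_⟩
        refine sub_eq_zero.1 (ih (fun j => ha.act g (b j) - counit (R := F) g • b j) ?_ j hj)
        ext h
        have hsub : ∑ j ∈ insert k s,
            (ha.act g (b j) - counit (R := F) g • b j) * ha.act h (a j) = 0 := by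
          simp only [sub_mul, smul_mul_assoc, Finset.sum_sub_distrib, ← Finset.smul_sum, hb,
            sum_act_mul_act_eq_zero hb, smul_zero, sub_zero]
        rw [Finset.sum_insert hk, bk_eq, ha.act_one, Algebra.algebraMap_eq_smul_one, sub_self,
          zero_mul, zero_add] at hsub
        simpa using hsub
      have b_eq_zero := Fintype.linearIndependent_iff.1 (hli.comp _ Subtype.val_injective)
        (fun j : ↥(insert k s) => ⟨b j, b_mem j j.2⟩)
        ((Finset.sum_coe_sort _ fun j => b j * a j).trans (by simpa only [ha.one_act] using hb 1))
        ⟨k, Finset.mem_insert_self k s⟩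
      exact one_ne_zero (bk_eq.symm.trans (congrArg Subtype.val b_eq_zero))
    refine Finset.forall_mem_insert _ _ _ |>.2 ⟨ck_eq, ih c ?_⟩
    ext h
    simpa [Finset.sum_insert hk, ck_eq] using hc h

lemma rank_invariantSubfield_le [FiniteDimensional F H] :
    Module.rank ha.invariantSubfield A ≤ Module.finrank F H := by
  refine rank_le fun s hs => ?_
  let e := Module.finBasis F H
  let extend : (Fin (Module.finrank F H) → A) →ₗ[A] H → A :=
    LinearMap.pi fun h => ∑ i, e.repr h i • LinearMap.proj i
  have extend_act (a : A) : extend (fun i => ha.act (e i) a) = fun h => ha.act h a := by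
    ext h
    simpa [extend, -Module.Basis.sum_repr] using
      LinearMap.congr_fun (congrArg ha.act (e.sum_repr h)) a
  have hli : LinearIndependent A fun (a : s) i => ha.act (e i) (a : A) :=
    .of_comp extend (by simpa only [Function.comp_def, extend_act] using linearIndependent_act hs)
  simpa using hli.fintype_card_le_finrank

instance [FiniteDimensional F H] : Module.Finite ha.invariantSubfield A :=
  Module.rank_lt_aleph0_iff.1 <| (rank_invariantSubfield_le).trans_lt Cardinal.natCast_lt_aleph0

end HopfAction

section TensorIdeal

lemma tensorIdeal_eq_ker {F H : Type} [CommRing F] [Ring H] [Module F H] (N : Submodule F H) :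
    tensorIdeal F H N = LinearMap.ker (TensorProduct.map N.mkQ N.mkQ) := by
  have exact_mkQ := LinearMap.exact_subtype_mkQ N
  apply le_antisymm
  · rw [tensorIdeal, Submodule.span_le]
    rintro _ (⟨a, ha, b, rfl⟩ | ⟨a, b, hb, rfl⟩)
    · simp [(Submodule.Quotient.mk_eq_zero N).2 ha]
    · simp [(Submodule.Quotient.mk_eq_zero N).2 hb]
  · rw [TensorProduct.map_ker exact_mkQ N.mkQ_surjective exact_mkQ N.mkQ_surjective,
      sup_le_iff, LinearMap.lTensor, LinearMap.rTensor, TensorProduct.range_map_eq_span_tmul,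
      TensorProduct.range_map_eq_span_tmul]
    constructor <;> apply Submodule.span_mono <;> rintro _ ⟨a, b, rfl⟩
    · exact .inr ⟨a, b, b.2, rfl⟩
    · exact .inl ⟨a, a.2, b, rfl⟩

lemma tensorIdeal_bot {F H : Type} [CommRing F] [Ring H] [Module F H] :
    tensorIdeal F H ⊥ = ⊥ := by
  rw [eq_bot_iff, tensorIdeal, Submodule.span_le]
  rintro _ (⟨a, rfl, b, rfl⟩ | ⟨a, b, rfl, rfl⟩) <;> simp

lemma mem_tensorIdeal_dualCoannihilator {F H : Type} [Field F] [Ring H] [Module F H]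
    [FiniteDimensional F H] {W : Submodule F (Module.Dual F H)} {X : H ⊗[F] H}
    (hX : ∀ f ∈ W, ∀ g ∈ W, LinearMap.mul' F F (TensorProduct.map f g X) = 0) :
    X ∈ tensorIdeal F H W.dualCoannihilator := by
  let N := W.dualCoannihilator
  have comp_mkQ_mem (f : Module.Dual F (H ⧸ N)) : f ∘ₗ N.mkQ ∈ W := by
    rw [← Subspace.dualCoannihilator_dualAnnihilator_eq (W := W), Submodule.mem_dualAnnihilator]
    exact fun x hx => by simp [(Submodule.Quotient.mk_eq_zero N).2 hx]
  rw [tensorIdeal_eq_ker, LinearMap.mem_ker, ← Module.forall_dual_apply_eq_zero_iff F]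
  intro φ
  obtain ⟨t, rfl⟩ := (TensorProduct.dualDistribEquiv F (H ⧸ N) (H ⧸ N)).surjective φ
  induction t with
  | zero => simp
  | add s t hs ht => rw [map_add, LinearMap.add_apply, hs, ht, add_zero]
  | tmul f g =>
    rw [← hX _ (comp_mkQ_mem f) _ (comp_mkQ_mem g), TensorProduct.map_comp]
    rfl

end TensorIdeal

/-- `N` is a coideal of `H` and `H ⧸ N` is a cocommutative coalgebra. -/
structure IsCocommutativeCoideal (F : Type) {H : Type} [CommRing F] [Ring H] [Bialgebra F H]
    (N : Submodule F H) : Prop where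
  comul_mem : ∀ h ∈ N, comul h ∈ tensorIdeal F H N
  counit_eq_zero : ∀ h ∈ N, counit (R := F) h = 0
  comul_sub_comm_mem : ∀ h : H, comul h - TensorProduct.comm F H H (comul h) ∈ tensorIdeal F H N

section Annihilator

variable {F H : Type} [Field F] [Ring H] [Bialgebra F H]

/-- The common kernel of the functionals in a subalgebra of the dual algebra of `H`. -/
noncomputable def ConvAlg.annihilator (B : Subalgebra F (ConvAlg F H F)) : Submodule F H :=
  (B.toSubmodule.map (WithConv.linearEquiv F (H →ₗ[F] F)).toLinearMap).dualCoannihilator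

lemma ConvAlg.mem_annihilator {B : Subalgebra F (ConvAlg F H F)} {h : H} :
    h ∈ annihilator B ↔ ∀ f ∈ B, f.ofConv h = 0 := by
  rw [annihilator, Submodule.mem_dualCoannihilator]
  exact ⟨fun hh f hf => hh _ ⟨f, hf, rfl⟩, by rintro hh _ ⟨f, hf, rfl⟩; exact hh f hf⟩

lemma ConvAlg.mem_tensorIdeal_annihilator [FiniteDimensional F H]
    {B : Subalgebra F (ConvAlg F H F)} {X : H ⊗[F] H}
    (hX : ∀ f ∈ B, ∀ g ∈ B, LinearMap.mul' F F (TensorProduct.map f.ofConv g.ofConv X) = 0) :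
    X ∈ tensorIdeal F H (annihilator B) :=
  mem_tensorIdeal_dualCoannihilator <| by
    rintro _ ⟨f, hf, rfl⟩ _ ⟨g, hg, rfl⟩
    exact hX f hf g hg

lemma isCocommutativeCoideal_annihilator [FiniteDimensional F H]
    {B : Subalgebra F (ConvAlg F H F)} (mul_comm : ∀ f ∈ B, ∀ g ∈ B, f * g = g * f) :
    IsCocommutativeCoideal F (ConvAlg.annihilator B) where
  comul_mem h hh := ConvAlg.mem_tensorIdeal_annihilator fun f hf g hg =>
    ConvAlg.mem_annihilator.1 hh _ (mul_mem hf hg)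
  counit_eq_zero h hh := by simpa using ConvAlg.mem_annihilator.1 hh 1 (one_mem B)
  comul_sub_comm_mem h := ConvAlg.mem_tensorIdeal_annihilator fun f hf g hg => by
    have mul'_map_comm : LinearMap.mul' F F (TensorProduct.map f.ofConv g.ofConv
        (TensorProduct.comm F H H (comul h))) = (g * f).ofConv h := by
      rw [TensorProduct.map_comm, LinearMap.mul'_comm]
      rfl
    rw [map_sub, map_sub, mul'_map_comm, mul_comm g hg f hf, sub_eq_zero]
    rfl

end Annihilator

section Antipode

lemma mem_of_mul_eq_one {F A : Type*} [Field F] [Ring A] [Algebra F A] [FiniteDimensional F A]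
    {E : Subalgebra F A} {x y : A} (hx : x ∈ E) (hxy : x * y = 1) : y ∈ E := by
  have x_regular : IsRightRegular (⟨x, hx⟩ : E) := fun a b hab => Subtype.ext <| by
    simpa [mul_assoc, hxy] using congrArg (fun c : E => (c : A) * y) hab
  have : IsArtinianRing E := .of_finite F E
  obtain ⟨u, hu⟩ := (IsArtinianRing.isUnit_iff_isRightRegular.2 x_regular).exists_left_inv
  have u_eq : (u : A) = y := left_inv_eq_right_inv (congrArg Subtype.val hu) hxy
  exact u_eq ▸ u.2

variable {F H : Type} [Field F] [Ring H]

/-- The convolution endomorphisms of `H` that preserve a coideal and two-sided ideal `N`. -/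
noncomputable def convStabilizer [Bialgebra F H] (N : Submodule F H)
    (mul_mem : ∀ x ∈ N, ∀ h : H, h * x ∈ N ∧ x * h ∈ N)
    (comul_mem : ∀ x ∈ N, comul x ∈ tensorIdeal F H N)
    (counit_eq_zero : ∀ x ∈ N, counit (R := F) x = 0) :
    Subalgebra F (WithConv (H →ₗ[F] H)) where
  carrier := {f | ∀ x ∈ N, f.ofConv x ∈ N}
  mul_mem' {f g} hf hg x hx := by
    have map_tensorIdeal_le : tensorIdeal F H N ≤
        N.comap (LinearMap.mul' F H ∘ₗ TensorProduct.map f.ofConv g.ofConv) := by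
      rw [tensorIdeal, Submodule.span_le]
      rintro _ (⟨a, ha, b, rfl⟩ | ⟨a, b, hb, rfl⟩)
      · exact (mul_mem _ (hf a ha) _).2
      · exact (mul_mem _ (hg b hb) _).1
    exact map_tensorIdeal_le (comul_mem x hx)
  add_mem' {f g} hf hg x hx := add_mem (hf x hx) (hg x hx)
  algebraMap_mem' c x hx := by simp [counit_eq_zero x hx]

variable [HopfAlgebra F H] [FiniteDimensional F H]

lemma antipode_mem (N : Submodule F H)
    (mul_mem : ∀ x ∈ N, ∀ h : H, h * x ∈ N ∧ x * h ∈ N)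
    (comul_mem : ∀ x ∈ N, comul x ∈ tensorIdeal F H N)
    (counit_eq_zero : ∀ x ∈ N, counit (R := F) x = 0) : ∀ x ∈ N, antipode F x ∈ N := by
  have : Module.Finite F (WithConv (H →ₗ[F] H)) :=
    .equiv (WithConv.linearEquiv F (H →ₗ[F] H)).symm
  exact mem_of_mul_eq_one (E := convStabilizer N mul_mem comul_mem counit_eq_zero)
    (x := toConv LinearMap.id) (fun x hx => hx) LinearMap.id_mul_antipode

lemma isHopfIdeal_actionKernel {A : Type} [Ring A] [Algebra F A]
    {ha : HopfAction F H A} (hN : IsCocommutativeCoideal F ha.actionKernel) :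
    IsHopfIdeal F H ha.actionKernel := by
  have mul_mem : ∀ x ∈ ha.actionKernel, ∀ h : H,
      h * x ∈ ha.actionKernel ∧ x * h ∈ ha.actionKernel := by
    simp +contextual [HopfAction.mem_actionKernel, ha.mul_act]
  exact ⟨mul_mem, hN.comul_mem, hN.counit_eq_zero,
    antipode_mem _ mul_mem hN.comul_mem hN.counit_eq_zero⟩

end Antipode

namespace HopfAction

section Coaction

variable {F H L : Type} [CommRing F] [Ring H] [Bialgebra F H] [CommRing L] [Algebra F L]
  (ha : HopfAction F H L)

/-- The coaction dual to an action on a commutative algebra, sending `a` to `h ↦ h · a`. -/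
noncomputable def coaction : L →+* ConvAlg F H L where
  toFun a := toConv (ha.act.flip a)
  map_zero' := ConvAlg.ext fun x => by simp
  map_add' a b := ConvAlg.ext fun x => by simp
  map_one' := ConvAlg.ext fun x => by simp [ha.act_one]
  map_mul' a b := ConvAlg.ext fun x => by
    rw [ConvAlg.mul_apply]
    exact ha.act_mul_eq_sum x a b

@[simp]
lemma coaction_apply (a : L) (h : H) : (ha.coaction a).ofConv h = ha.act h a := rfl

lemma translationAction_coaction (h : H) (a : L) :
    (translationAction F H L).act h (ha.coaction a) = ha.coaction (ha.act h a) :=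
  ConvAlg.ext fun x => ha.mul_act x h a

/-- The subalgebra of the convolution algebra generated by the image of the coaction. -/
noncomputable def coactionSubalgebra : Subalgebra L (ConvAlg F H L) :=
  Algebra.adjoin L ha.coaction.range

lemma coaction_mem (a : L) : ha.coaction a ∈ ha.coactionSubalgebra :=
  Algebra.subset_adjoin ⟨a, rfl⟩

lemma toSubmodule_coactionSubalgebra :
    ha.coactionSubalgebra.toSubmodule = Submodule.span L (Set.range ha.coaction) := by
  rw [coactionSubalgebra, Algebra.adjoin_eq_span]
  exact congrArg (Submodule.span L ·)
    (congrArg SetLike.coe (Submonoid.closure_eq ha.coaction.range.toSubmonoid))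

lemma coactionSubalgebra_le {M : Submodule L (ConvAlg F H L)} (hM : ∀ a, ha.coaction a ∈ M) :
    ha.coactionSubalgebra.toSubmodule ≤ M := by
  rw [toSubmodule_coactionSubalgebra, Submodule.span_le]
  exact Set.range_subset_iff.2 hM

lemma act_mem_coactionSubalgebra (h : H) {f : ConvAlg F H L} (hf : f ∈ ha.coactionSubalgebra) :
    (translationAction F H L).act h f ∈ ha.coactionSubalgebra := by
  let translate : ConvAlg F H L →ₗ[L] ConvAlg F H L :=
    { (translationAction F H L).act h with map_smul' := fun l f => rfl }
  have coaction_mem_comap (a : L) :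
      ha.coaction a ∈ ha.coactionSubalgebra.toSubmodule.comap translate := by
    change (translationAction F H L).act h (ha.coaction a) ∈ ha.coactionSubalgebra
    exact ha.translationAction_coaction h a ▸ ha.coaction_mem _
  exact ha.coactionSubalgebra_le coaction_mem_comap hf

lemma mem_actionKernel_iff_forall_coactionSubalgebra {h : H} :
    h ∈ ha.actionKernel ↔ ∀ f ∈ ha.coactionSubalgebra, f.ofConv h = 0 := by
  rw [mem_actionKernel]
  exact ⟨fun hh f hf => ha.coactionSubalgebra_le (M := LinearMap.ker (ConvAlg.eval L h)) hh hf,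
    fun hh a => hh _ (ha.coaction_mem a)⟩

end Coaction

section Trace

variable {F H : Type} [Field F] [Ring H] [HopfAlgebra F H] {Λ : H}

lemma act_integral_act_mul {A : Type} [Ring A] [Algebra F A] (ha : HopfAction F H A)
    (hΛ : IsNormalizedIntegral F Λ) (h : H) (a b : A) :
    ha.act Λ (ha.act h a * b) = ha.act Λ (a * ha.act (antipode F h) b) := by
  rw [← ha.sum_act_mul_act_antipode h a b, map_sum]
  simp only [← ha.mul_act, hΛ.mul_right, map_smul, LinearMap.smul_apply]
  exact sum_counit_left_smul_right
    (ha.act Λ ∘ₗ LinearMap.mul F A a ∘ₗ ha.act.flip b ∘ₗ antipode F) h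

/-- The trace onto the invariants defined by a normalized integral. -/
noncomputable def trace {A : Type} [DivisionRing A] [Algebra F A] (ha : HopfAction F H A)
    (hΛ : IsNormalizedIntegral F Λ) : A →ₗ[ha.invariantSubfield] ha.invariantSubfield where
  toFun a := ⟨ha.act Λ a, fun h => by rw [← ha.mul_act, hΛ.mul_left]; simp⟩
  map_add' a b := Subtype.ext (by simp)
  map_smul' c a := Subtype.ext (ha.act_mul_of_left_mem_invariants c.2 Λ a)

variable {L : Type} [Field L] [Algebra F L] (ha : HopfAction F H L)

lemma eq_zero_of_forall_trace_mul_eq_zero (hΛ : IsNormalizedIntegral F Λ) (a : L)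
    (h : ∀ b, ha.trace hΛ (a * b) = 0) : a = 0 := by
  by_contra a_ne
  have trace_one : ha.act Λ (a * a⁻¹) = 0 := congrArg Subtype.val (h a⁻¹)
  rw [mul_inv_cancel₀ a_ne, ha.act_one, hΛ.counit_eq_one, map_one] at trace_one
  exact one_ne_zero trace_one

lemma apply_eq_sum_apply_integral (hΛ : IsNormalizedIntegral F Λ) {n : ℕ} {v w : Fin n → L}
    (hvw : AreDualBases (ha.trace hΛ) v w) (h : H) {f : ConvAlg F H L}
    (hf : f ∈ ha.coactionSubalgebra) : f.ofConv h =
      ∑ j, v j * (f * ha.coaction (ha.act (antipode F h) (w j))).ofConv Λ := by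
  have coaction_mem_eqLocus (a : L) : ha.coaction a ∈ LinearMap.eqLocus (ConvAlg.eval L h)
      (∑ j, v j • ConvAlg.eval L Λ ∘ₗ
        LinearMap.mulRight L (ha.coaction (ha.act (antipode F h) (w j)))) := by
    rw [LinearMap.mem_eqLocus]
    simp only [LinearMap.sum_apply, LinearMap.smul_apply, LinearMap.comp_apply,
      LinearMap.mulRight_apply, ← map_mul, ConvAlg.eval_apply, coaction_apply,
      ← ha.act_integral_act_mul hΛ]
    conv_lhs => rw [← hvw.sum_right (ha.act h a)]
    exact Finset.sum_congr rfl fun j _ => mul_comm _ _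
  simpa using ha.coactionSubalgebra_le coaction_mem_eqLocus hf

lemma isFrobeniusSubalgebra_coactionSubalgebra [FiniteDimensional F H]
    (hΛ : IsNormalizedIntegral F Λ) : IsFrobeniusSubalgebra Λ ha.coactionSubalgebra where
  mul_comm f hf g hg := congrArg Subtype.val <|
    (Algebra.isMulCommutative_adjoin L <| by
      rintro _ ⟨a, rfl⟩ _ ⟨b, rfl⟩
      rw [← map_mul, ← map_mul, mul_comm]).is_comm.comm ⟨f, hf⟩ ⟨g, hg⟩
  act_mem h f hf := ha.act_mem_coactionSubalgebra h hf
  nondegenerate f hf hfg := by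
    obtain ⟨n, v, w, hvw⟩ := exists_areDualBases (ha.eq_zero_of_forall_trace_mul_eq_zero hΛ)
    refine ConvAlg.ext fun h => ?_
    rw [ha.apply_eq_sum_apply_integral hΛ hvw h hf]
    exact Finset.sum_eq_zero fun j _ => by rw [hfg _ (ha.coaction_mem _), mul_zero]

end Trace

theorem isCocommutativeCoideal_actionKernel {F H L : Type} [Field F] [IsAlgClosed F] [Ring H]
    [HopfAlgebra F H] [FiniteDimensional F H] [IsSemisimpleRing H] (hH : IsCosemisimple F H)
    [Field L] [Algebra F L] (ha : HopfAction F H L) :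
    IsCocommutativeCoideal F ha.actionKernel := by
  obtain ⟨Λ, hΛ⟩ := exists_isNormalizedIntegral (F := F) (H := H)
  have hB := ha.isFrobeniusSubalgebra_coactionSubalgebra hΛ
  have hF := hB.isDefinedOver_base hΛ hH
  let B₀ := (ha.coactionSubalgebra.restrictScalars F).comap (ConvAlg.coeffMap F H F L)
  have kernel_eq : ha.actionKernel = ConvAlg.annihilator B₀ := by
    ext h
    rw [mem_actionKernel_iff_forall_coactionSubalgebra, ConvAlg.mem_annihilator]
    refine ⟨fun hh f hf => (algebraMap F L).injective ?_, fun hh f hf => ?_⟩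
    · exact (hh _ hf).trans (map_zero _).symm
    · refine hF.toSubmodule_le (M := LinearMap.ker (ConvAlg.eval L h)) (fun f hf => ?_) hf
      exact (congrArg (algebraMap F L) (hh f hf)).trans (map_zero _)
  rw [kernel_eq]
  exact isCocommutativeCoideal_annihilator (hB.comap_coeffMap hF).mul_comm

end HopfAction

/-- A ring as an algebra over its center, with the module structure of a subalgebra. -/
noncomputable abbrev centerAlgebra (F A : Type) [Field F] [Ring A] [Algebra F A] :
    Algebra (Subalgebra.center F A) A :=
  Algebra.ofModule (fun z a b => smul_mul_assoc z a b) (fun z a b => by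
      simp only [Subalgebra.smul_def, smul_eq_mul, ← mul_assoc, Subalgebra.mem_center_iff.1 z.2 a])

lemma isField_center (F D : Type) [Field F] [DivisionRing D] [Algebra F D] :
    IsField (Subalgebra.center F D) := Field.toIsField (Subring.center D)

namespace HopfAction

variable {F H D : Type} [Field F] [Ring H] [HopfAlgebra F H] [DivisionRing D] [Algebra F D]
  {ha : HopfAction F H D}

lemma finrank_adjoin_invariants_le {Z : Type*} [CommRing Z] [Algebra Z D] [FiniteDimensional F H] :
    Module.finrank (Algebra.adjoin Z ha.invariants) D ≤ Module.finrank F H :=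
  Module.finrank_le_of_rank_le <| (rank_le_of_injective_injective
    (fun a : ha.invariantSubfield =>
      (⟨(a : D), Algebra.subset_adjoin a.2⟩ : Algebra.adjoin Z ha.invariants))
    (AddMonoidHom.id D) (fun _ h => Subtype.ext (congrArg Subtype.val h :)) Function.injective_id
    fun _ _ => rfl).trans rank_invariantSubfield_le

lemma adjoin_invariants_eq_top {Z : Type*} [Field Z] [Algebra Z D] [FiniteDimensional F H]
    [FiniteDimensional Z D]
    (hcop : (Module.finrank F H).factorial.Coprime (Module.finrank Z D)) :
    Algebra.adjoin Z ha.invariants = ⊤ := by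
  let E := Algebra.adjoin Z ha.invariants
  let : DivisionRing E := divisionRingOfFiniteDimensional Z E
  have : Module.Finite E D := .of_restrictScalars_finite Z E D
  have finrank_dvd : Module.finrank E D ∣ Module.finrank Z D :=
    ⟨_, ((mul_comm _ _).trans (Module.finrank_mul_finrank Z E D)).symm⟩
  have finrank_eq_one : Module.finrank E D = 1 := Nat.eq_one_of_dvd_coprimes hcop
    (Nat.dvd_factorial Module.finrank_pos finrank_adjoin_invariants_le) finrank_dvd
  refine eq_top_iff.2 fun x _ => ?_
  obtain ⟨c, rfl⟩ := (finrank_eq_one_iff_of_nonzero' (1 : D) one_ne_zero).1 finrank_eq_one x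
  rw [Subalgebra.smul_def, smul_eq_mul, mul_one]
  exact c.2

lemma span_invariants_eq_top {Z : Type*} [CommRing Z] [Algebra Z D]
    (hadjoin : Algebra.adjoin Z ha.invariants = ⊤) : Submodule.span Z ha.invariants = ⊤ := by
  have closure_eq : (Submonoid.closure ha.invariants : Set D) = ha.invariants :=
    congrArg SetLike.coe (Submonoid.closure_eq ha.invariantSubfield.toSubmonoid)
  rw [← closure_eq, ← Algebra.adjoin_eq_span, hadjoin, Algebra.top_toSubmodule]

section Center

variable {A : Type} [Ring A] [Algebra F A] {ha : HopfAction F H A}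

lemma act_mem_center (hspan : Submodule.span (Subalgebra.center F A) ha.invariants = ⊤)
    (h : H) {z : A} (hz : z ∈ Subalgebra.center F A) : ha.act h z ∈ Subalgebra.center F A := by
  let := centerAlgebra F A
  rw [Subalgebra.mem_center_iff] at hz ⊢
  intro b
  have b_mem : b ∈ Submodule.span (Subalgebra.center F A) ha.invariants := hspan ▸ trivial
  induction b_mem using Submodule.span_induction with
  | mem e he =>
    rw [← ha.act_mul_of_left_mem_invariants he, ← ha.act_mul_of_right_mem_invariants he, hz]
  | zero => simp
  | add x y _ _ hx hy => rw [add_mul, mul_add, hx, hy]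
  | smul c x _ hx => rw [smul_mul_assoc, mul_smul_comm, hx]

lemma actionKernel_restrict_center
    (hspan : Submodule.span (Subalgebra.center F A) ha.invariants = ⊤) :
    (ha.restrict (Subalgebra.center F A) fun h _ => act_mem_center hspan h).actionKernel =
      ha.actionKernel := by
  ext h
  simp only [mem_actionKernel]
  refine ⟨fun hh b => ?_, fun hh z => Subtype.ext (hh z)⟩
  have b_mem : b ∈ Submodule.span (Subalgebra.center F A) ha.invariants := hspan ▸ trivial
  obtain ⟨n, z, e, rfl⟩ := Submodule.mem_span_set'.1 b_mem
  rw [map_sum]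
  refine Finset.sum_eq_zero fun i _ => ?_
  have act_z_eq_zero : ha.act h (z i : A) = 0 := congrArg Subtype.val (hh (z i))
  rw [Subalgebra.smul_def, smul_eq_mul, ha.act_mul_of_right_mem_invariants (e i).2, act_z_eq_zero,
    zero_mul]

end Center

theorem isCocommutativeCoideal_actionKernel_of_coprime_finrank_center [IsAlgClosed F]
    [FiniteDimensional F H] [IsSemisimpleRing H] (hH : IsCosemisimple F H)
    [Module.Finite (Subalgebra.center F D) D]
    (hcop : (Module.finrank F H).factorial.Coprime (Module.finrank (Subalgebra.center F D) D))
    (ha : HopfAction F H D) : IsCocommutativeCoideal F ha.actionKernel := by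
  let : Field (Subalgebra.center F D) := (isField_center F D).toField
  let := centerAlgebra F D
  have hspan : Submodule.span (Subalgebra.center F D) ha.invariants = ⊤ :=
    span_invariants_eq_top (adjoin_invariants_eq_top hcop)
  rw [← actionKernel_restrict_center hspan]
  exact isCocommutativeCoideal_actionKernel hH _

end HopfAction

lemma comm_comul_of_finrank_le_one {F H : Type*} [Field F] [Ring H] [Bialgebra F H]
    [FiniteDimensional F H] (hd : Module.finrank F H ≤ 1) (h : H) :
    TensorProduct.comm F H H (comul h) = comul h := by
  have : Nontrivial H := (Bialgebra.counitAlgHom F H).toRingHom.domain_nontrivial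
  have finrank_eq_one : Module.finrank F H = 1 := hd.antisymm Module.finrank_pos
  obtain ⟨c, rfl⟩ := (finrank_eq_one_iff_of_nonzero' (1 : H) one_ne_zero).1 finrank_eq_one h
  simp [Algebra.TensorProduct.one_def]

/-- Let `H` be a semisimple cosemisimple Hopf algebra of dimension `d` over an
algebraically closed field `F` and `D` a division algebra over `F` of degree `m` with
`gcd(d!, m) = 1`.  Then any action of `H` on `D` factors through an action of a
cocommutative Hopf algebra (the quotient of `H` by the kernel of the action is
cocommutative); in particular if the action is inner faithful then `H` is cocommutative. -/
theorem action_on_division_algebra_factors_through_cocommutative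
    (F : Type) [Field F] [IsAlgClosed F]
    (H : Type) [Ring H] [HopfAlgebra F H] [FiniteDimensional F H]
    [IsSemisimpleRing H] (hcss : IsCosemisimple F H)
    (D : Type) [DivisionRing D] [Algebra F D]
    (d m : ℕ) (hd : Module.finrank F H = d)
    (hm : Module.finrank (Subalgebra.center F D) D = m ^ 2)
    (hcop : Nat.Coprime d.factorial m)
    (ha : HopfAction F H D) :
    (∀ h : H,
      Coalgebra.comul (R := F) h - (TensorProduct.comm F H H) (Coalgebra.comul (R := F) h)
        ∈ tensorIdeal F H ha.actionKernel) ∧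
    (ha.InnerFaithful → ∀ h : H,
      (TensorProduct.comm F H H) (Coalgebra.comul (R := F) h) = Coalgebra.comul (R := F) h) := by
  -- If `D` has infinite dimension over its center, `finrank` and hence `m` are `0`, and `d! = 1`.
  obtain rfl | m_ne := eq_or_ne m 0
  · have finrank_le_one : Module.finrank F H ≤ 1 := by
      rwa [Nat.coprime_zero_right, Nat.factorial_eq_one, ← hd] at hcop
    have comm_comul := comm_comul_of_finrank_le_one finrank_le_one
    exact ⟨fun h => by rw [comm_comul, sub_self]; exact zero_mem _, fun _ => comm_comul⟩
  · let : Field (Subalgebra.center F D) := (isField_center F D).toField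
    have : Module.Finite (Subalgebra.center F D) D :=
      Module.finite_of_finrank_pos (hm ▸ pow_pos (Nat.pos_of_ne_zero m_ne) 2)
    have hN : IsCocommutativeCoideal F ha.actionKernel :=
      ha.isCocommutativeCoideal_actionKernel_of_coprime_finrank_center hcss
        (hd.symm ▸ hm.symm ▸ hcop.pow_right 2)
    refine ⟨hN.comul_sub_comm_mem, fun hfaithful h => ?_⟩
    have kernel_eq_bot : ha.actionKernel = ⊥ :=
      hfaithful _ (isHopfIdeal_actionKernel hN) fun x hx => ha.mem_actionKernel.1 hx
    have comul_sub_comm_mem := hN.comul_sub_comm_mem h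
    rw [kernel_eq_bot, tensorIdeal_bot, Submodule.mem_bot, sub_eq_zero] at comul_sub_comm_mem
    exact comul_sub_comm_mem.symm
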